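/- Let (R, m) be an analytically unramified Noetherian local ring with conductor ideal 𝔠. If 𝔠 has finite projective dimension as an R-module, then R is normal (i.e. R is reduced and equals its integral closure R̄ in its total ring of fractions; equivalently R_p is an integrally closed domain for every prime ideal p). -/

import Mathlib

open CategoryTheory IsLocalRing

set_option synthInstance.maxHeartbeats 1000000
set_option maxHeartbeats 1000000

noncomputable section

/-- The integral closure `R̄` of `R` in its total ring of fractions, viewed as a type
(with its canonical `R`-algebra and `R`-module structures). -/
abbrev IntClosure (R : Type) [CommRing R] : Type :=
  ↥(integralClosure R (FractionRing R))

/-- The quotient `R`-module `R̄/R`. -/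
abbrev IntClosureQuot (R : Type) [CommRing R] : Type :=
  IntClosure R ⧸ LinearMap.range (Algebra.linearMap R (IntClosure R))

/-- The conductor ideal `𝔠 = Ann_R(R̄/R) = {r : R | r • R̄ ⊆ R}`. -/
def conductorIdeal (R : Type) [CommRing R] : Ideal R :=
  Module.annihilator R (IntClosureQuot R)

/-- A local ring `R` is analytically unramified if its `m`-adic completion is reduced. -/
def AnalyticallyUnramified (R : Type) [CommRing R] [IsLocalRing R] : Prop :=
  IsReduced (AdicCompletion (maximalIdeal R) R)

/-- `R` is normal: it is reduced and equal to its integral closure `R̄` in its total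
ring of fractions. -/
def IsNormalRing (R : Type) [CommRing R] : Prop :=
  IsReduced R ∧ integralClosure R (FractionRing R) = ⊥

/-- `Ext^i_R(M, N)` as a type. -/
abbrev ExtMod (R : Type) [CommRing R] (M : Type) [AddCommGroup M] [Module R M]
    (N : Type) [AddCommGroup N] [Module R N] (i : ℕ) : Type :=
  ↥(((Ext R (ModuleCat.{0} R) i).obj (Opposite.op (ModuleCat.of R M))).obj (ModuleCat.of R N))

/-- `M` has finite projective dimension over `R`:
`Ext^i_R(M, -)` vanishes for all `i` bigger than some `n`. -/
def HasFiniteProjDim (R : Type) [CommRing R] (M : Type) [AddCommGroup M] [Module R M] : Prop :=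
  ∃ n : ℕ, ∀ (N : ModuleCat.{0} R) (i : ℕ), n < i →
    Subsingleton ↥(((Ext R (ModuleCat.{0} R) i).obj (Opposite.op (ModuleCat.of R M))).obj N)

/-- `M` has finite injective dimension over `R`:
`Ext^i_R(-, M)` vanishes for all `i` bigger than some `n`. -/
def HasFiniteInjDim (R : Type) [CommRing R] (M : Type) [AddCommGroup M] [Module R M] : Prop :=
  ∃ n : ℕ, ∀ (N : ModuleCat.{0} R) (i : ℕ), n < i →
    Subsingleton ↥(((Ext R (ModuleCat.{0} R) i).obj (Opposite.op N)).obj (ModuleCat.of R M))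

/-- The depth of an `R`-module `M` over a local ring `(R, m)`: the least `i` such that
`Ext^i_R(R/m, M) ≠ 0` (`⊤` if there is no such `i`), valued in `WithBot (WithTop ℕ)`
for easy comparison with `ringKrullDim`. -/
def moduleDepth (R : Type) [CommRing R] [IsLocalRing R]
    (M : Type) [AddCommGroup M] [Module R M] : WithBot (WithTop ℕ) :=
  sInf { n : WithBot (WithTop ℕ) |
    ∃ i : ℕ, n = (i : ℕ) ∧ Nontrivial (ExtMod R (ResidueField R) M i) }

/-- A Noetherian local ring is Gorenstein if it has finite injective dimension
as a module over itself. -/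
def IsGorensteinLocal (R : Type) [CommRing R] [IsLocalRing R] : Prop :=
  IsNoetherianRing R ∧ HasFiniteInjDim R R

/-- A Noetherian local ring is Cohen–Macaulay if its depth equals its Krull dimension. -/
def IsCohenMacaulayLocal (R : Type) [CommRing R] [IsLocalRing R] : Prop :=
  IsNoetherianRing R ∧ moduleDepth R R = ringKrullDim R

/-- A ring is Cohen–Macaulay if it is Noetherian and all its localizations at primes
are Cohen–Macaulay local rings. -/
def IsCohenMacaulayRing (A : Type) [CommRing A] : Prop :=
  IsNoetherianRing A ∧ ∀ (p : Ideal A) [p.IsPrime],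
    moduleDepth (Localization.AtPrime p) (Localization.AtPrime p) =
      ringKrullDim (Localization.AtPrime p)

/-- Serre's condition `(S2)`: `depth (R_p) ≥ min {2, height p}` for every prime `p`
(`height p` being the dimension of `R_p`). -/
def SerreS2 (R : Type) [CommRing R] : Prop :=
  ∀ (p : Ideal R) [p.IsPrime],
    min 2 (ringKrullDim (Localization.AtPrime p)) ≤
      moduleDepth (Localization.AtPrime p) (Localization.AtPrime p)

/-- A Noetherian local ring is regular if its maximal ideal can be generated by
`dim R` elements. -/
def IsRegularLocal (A : Type) [CommRing A] [IsLocalRing A] : Prop :=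
  IsNoetherianRing A ∧ ∃ s : Finset A, Ideal.span (s : Set A) = maximalIdeal A ∧
    (s.card : WithBot (WithTop ℕ)) = ringKrullDim A

/-- Serre's condition `(R1)`: `R_p` is regular for every prime `p` of height at most `1`. -/
def SerreR1 (R : Type) [CommRing R] : Prop :=
  ∀ (p : Ideal R) [p.IsPrime], ringKrullDim (Localization.AtPrime p) ≤ 1 →
    IsRegularLocal (Localization.AtPrime p)

/-- The `i`-th local cohomology `H^i_m(M)` of `M` with support in the maximal ideal,
as a type. -/
abbrev localCohMod (R : Type) [CommRing R] [IsLocalRing R] (i : ℕ)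
    (M : Type) [AddCommGroup M] [Module R M] : Type :=
  ↥((localCohomology (maximalIdeal R) i).obj (ModuleCat.of R M))

/-- `x : Fin d → R` is a system of parameters for the local ring `(R, m)`:
`d = dim R`, all `x i` lie in `m`, and the ideal they generate is `m`-primary
(its radical is `m`). -/
def IsSystemOfParameters (R : Type) [CommRing R] [IsLocalRing R] {d : ℕ}
    (x : Fin d → R) : Prop :=
  (d : WithBot (WithTop ℕ)) = ringKrullDim R ∧ (∀ i, x i ∈ maximalIdeal R) ∧
    (Ideal.span (Set.range x)).radical = maximalIdeal R

/-- `E` is an injective hull of the residue field of the local ring `R`: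
`E` is injective and contains a copy of `R/m` as an essential submodule. -/
def IsInjectiveHullOfResidueField (R : Type) [CommRing R] [IsLocalRing R]
    (E : Type) [AddCommGroup E] [Module R E] : Prop :=
  Module.Injective R E ∧ ∃ f : ResidueField R →ₗ[R] E, Function.Injective f ∧
    ∀ N : Submodule R E, N ≠ ⊥ → N ⊓ LinearMap.range f ≠ ⊥

/-!
Let `C` be the conductor, and suppose `R̄` is a finite `R`-module, so that `C` contains a
nonzerodivisor. If `a / s` is integral over `R`, then `a C ⊆ s C`, because `C` is an ideal of `R̄`.
If `s` does not divide `a`, some multiple `b = r a` has annihilator in `R / s` a prime `p`. In `R_p`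
we have `s ∤ b` and `p b ⊆ s R_p`; multiplication by `b` therefore maps the first syzygy `Z ⊆ p F`
in a minimal presentation of an `s`-torsion-free module into `s Z`, which is impossible for a
nonzero free `Z`. Hence `C_p`, being of finite projective dimension, is free, and `b C_p ⊆ s C_p`
gives `s ∣ b`, a contradiction.

Finiteness of `R̄` descends along the faithfully flat completion, and for a reduced ring it follows
from finiteness for the quotients by the minimal primes; so consider a complete local domain `A`
with field of fractions `K` and integral closure `B`. By induction on quotients, `B ⧸ Q` is finite
for the nonzero primes `Q = {b | b z ∈ B}` with `z : K`. Finitely many of these contain a given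
nonzero `x` in the maximal ideal of `A`, and divisibility by `x` in `B` is tested at them, so
`B ⧸ x B` is finite. As `B` is `x`-adically separated, `B` is finite by completeness.
-/

section CompleteIntegralClosedness

variable {A K : Type*} [CommRing A] [Field K] [Algebra A K]

theorem isIntegral_of_mem_adjoin_inv {z : K} (hz : z ∈ Algebra.adjoin A {z⁻¹}) :
    IsIntegral A z := by
  rcases eq_or_ne z 0 with rfl | hz0
  · exact isIntegral_zero
  obtain ⟨p, hp⟩ := (Algebra.adjoin_singleton_eq_range_aeval A z⁻¹).le hz
  let _ : Invertible z⁻¹ := invertibleOfNonzero (inv_ne_zero hz0)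
  have hrev : Polynomial.aeval z p.reverse = z ^ (p.natDegree + 1) := by
    have h := Polynomial.eval₂_reverse_mul_pow (algebraMap A K) z⁻¹ p
    rw [invOf_eq_inv, inv_inv, ← Polynomial.aeval_def, ← Polynomial.aeval_def,
      show Polynomial.aeval z⁻¹ p = z from hp, inv_pow,
      mul_inv_eq_iff_eq_mul₀ (pow_ne_zero _ hz0)] at h
    rw [h, pow_succ']
  refine ⟨Polynomial.X ^ (p.natDegree + 1) - p.reverse, Polynomial.monic_X_pow_sub ?_, ?_⟩
  · exact p.reverse.degree_le_natDegree.trans_lt <|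
      WithBot.coe_lt_coe.2 <| Nat.lt_succ_of_le p.reverse_natDegree_le
  · rw [← Polynomial.aeval_def, map_sub, hrev, map_pow, Polynomial.aeval_X, sub_self]

theorem not_isUnit_inv_of_not_isIntegral {z : K} (hz : ¬ IsIntegral A z) :
    ¬ IsUnit (⟨z⁻¹, Algebra.self_mem_adjoin_singleton A z⁻¹⟩ : Algebra.adjoin A {z⁻¹}) := by
  intro hu
  have hz0 : z ≠ 0 := by rintro rfl; exact hz isIntegral_zero
  obtain ⟨⟨v, hv⟩, hzv⟩ := hu.exists_right_inv
  obtain rfl : z = v := (inv_mul_eq_one₀ hz0).1 (congrArg Subtype.val hzv)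
  exact hz (isIntegral_of_mem_adjoin_inv hv)

-- Localized at `P`, the ring has dimension one, so every nonunit is nilpotent modulo `c`.
theorem exists_notMem_dvd_mul_pow {T : Type*} [CommRing T] [IsDomain T] [IsNoetherianRing T]
    {P : Ideal T} [P.IsPrime] (hP : P.height ≤ 1) {u c : T} (hu : u ∈ P) (hc : c ≠ 0) :
    ∃ s ∉ P, ∃ n : ℕ, c ∣ s * u ^ n := by
  by_contra! hcon
  obtain ⟨P', hP', hcP', hdisj⟩ := Ideal.exists_le_prime_disjoint (Ideal.span {c})
    (P.primeCompl ⊔ Submonoid.powers u) <| Set.disjoint_left.2 fun w hw hwM ↦ by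
      obtain ⟨s, hs, _, ⟨n, rfl⟩, rfl⟩ := Submonoid.mem_sup.1 hwM
      exact hcon s hs n (Ideal.mem_span_singleton.1 hw)
  have hlt : P' < P := by
    refine lt_of_le_of_ne (fun w hw ↦ ?_) ?_
    · by_contra hwP
      exact Set.disjoint_left.1 hdisj hw (Submonoid.mem_sup_left hwP)
    · rintro rfl
      exact Set.disjoint_left.1 hdisj hu (Submonoid.mem_sup_right (Submonoid.mem_powers u))
  have hbot : ⊥ < P' := bot_lt_iff_ne_bot.2 fun h ↦ hc <| by
    simpa [h] using hcP' (Ideal.mem_span_singleton_self c)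
  have hht := (Ideal.height_strict_mono_of_isPrime_of_isPrime hlt).trans_le hP
  rw [Order.lt_one_iff] at hht
  exact not_lt_bot (hht ▸ Ideal.height_strict_mono_of_isPrime_of_isPrime hbot)

-- If all `c * z ^ k` were integral, then at a minimal prime `P` of `z⁻¹` in `A[z⁻¹]` some element
-- outside `P` would be an integral multiple of `z⁻¹`, contradicting lying over.
theorem exists_not_isIntegral_algebraMap_mul_pow [IsNoetherianRing A] {z : K}
    (hz : ¬ IsIntegral A z) {c : A} (hc : algebraMap A K c ≠ 0) :
    ∃ k : ℕ, ¬ IsIntegral A (algebraMap A K c * z ^ k) := by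
  by_contra! hint
  have hz0 : z ≠ 0 := by rintro rfl; exact hz isIntegral_zero
  let T := Algebra.adjoin A {z⁻¹}
  let u : T := ⟨z⁻¹, Algebra.self_mem_adjoin_singleton A z⁻¹⟩
  have : IsNoetherianRing T := isNoetherianRing_of_fg ⟨{z⁻¹}, by simp [T]⟩
  obtain ⟨P, hPmin⟩ := Ideal.nonempty_minimalPrimes (I := Ideal.span {u})
    (by simpa [Ideal.span_singleton_eq_top] using not_isUnit_inv_of_not_isIntegral hz)
  have hP : P.IsPrime := hPmin.1.1
  have huP : u ∈ P := hPmin.1.2 (Ideal.mem_span_singleton_self u)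
  have hcT : algebraMap A T c ≠ 0 := fun h ↦ hc (congrArg (algebraMap T K) h)
  obtain ⟨s, hs, n, e, hse⟩ := exists_notMem_dvd_mul_pow
    (Ideal.height_le_one_of_isPrincipal_of_mem_minimalPrimes _ P hPmin) huP hcT
  obtain ⟨Q, -, hQP⟩ := Ideal.exists_ideal_over_prime_of_isIntegral_of_isDomain
    (S := integralClosure T K) P fun a ha ↦ by
      obtain rfl : a = 0 := Subtype.ext (congrArg (algebraMap _ K) (RingHom.mem_ker.1 ha))
      exact P.zero_mem
  let w : integralClosure T K := ⟨algebraMap A K c * z ^ (n + 1) * e,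
    (hint (n + 1)).tower_top.mul (isIntegral_algebraMap (x := e))⟩
  have hsw : algebraMap T (integralClosure T K) s = algebraMap T _ u * w := by
    apply Subtype.ext
    have h : (s : K) * z⁻¹ ^ n = algebraMap A K c * e := congrArg Subtype.val hse
    change (s : K) = z⁻¹ * (algebraMap A K c * z ^ (n + 1) * e)
    rw [mul_right_comm, ← h, inv_pow, pow_succ]
    field_simp
  refine hs ?_
  rw [← hQP, Ideal.mem_comap, hsw]
  exact Q.mul_mem_right _ (Ideal.mem_comap.1 (hQP.ge huP))

theorem exists_isIntegral_and_not_isIntegral_mul [IsNoetherianRing A] {z : K}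
    (hz : ¬ IsIntegral A z) {c : A} (hc : algebraMap A K c ≠ 0) :
    ∃ n : ℕ, IsIntegral A (algebraMap A K c * z ^ n) ∧
      ¬ IsIntegral A (algebraMap A K c * z ^ n * z) := by
  by_contra! h
  obtain ⟨k, hk⟩ := exists_not_isIntegral_algebraMap_mul_pow hz hc
  refine hk (Nat.rec ?_ (fun n hn ↦ ?_) k)
  · simpa using isIntegral_algebraMap
  · rw [pow_succ, ← mul_assoc]
    exact h n hn

end CompleteIntegralClosedness

section IdealTransform

variable {A : Type*} [CommRing A]

/-- The ideal transform of `A` in the `A`-algebra `E`: the elements `e` with `I ^ n • e ⊆ A` for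
some `n`, that is, the sections of `E` that lie in `A` away from the zero locus of `I`. -/
def idealTransform (I : Ideal A) (E : Type*) [CommRing E] [Algebra A E] : Subalgebra A E where
  carrier := {e | ∃ n : ℕ, ∀ a ∈ I ^ n, a • e ∈ (⊥ : Subalgebra A E)}
  mul_mem' := by
    rintro e e' ⟨n, hn⟩ ⟨n', hn'⟩
    refine ⟨n + n', fun a ha ↦ ?_⟩
    rw [pow_add] at ha
    induction ha using Submodule.mul_induction_on' with
    | mem_mul_mem a ha a' ha' =>
      rw [← smul_mul_smul_comm]
      exact mul_mem (hn a ha) (hn' a' ha')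
    | add a _ a' _ h h' => rw [add_smul]; exact add_mem h h'
  add_mem' := by
    rintro e e' ⟨n, hn⟩ ⟨n', hn'⟩
    refine ⟨max n n', fun a ha ↦ ?_⟩
    rw [smul_add]
    exact add_mem (hn a (Ideal.pow_le_pow_right (le_max_left _ _) ha))
      (hn' a (Ideal.pow_le_pow_right (le_max_right _ _) ha))
  algebraMap_mem' a := ⟨0, fun _ _ ↦ Subalgebra.smul_mem _ (Subalgebra.algebraMap_mem _ a) _⟩

theorem smul_pow_mem_of_smul_mem {E : Type*} [CommRing E] [Algebra A E] {I : Ideal A} {z : E}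
    {S : Subalgebra A E} (h : ∀ a ∈ I, a • z ∈ S) (k : ℕ) : ∀ a ∈ I ^ k, a • z ^ k ∈ S := by
  induction k with
  | zero => intro a _; rw [pow_zero]; exact S.smul_mem S.one_mem a
  | succ k ih =>
    intro a ha
    rw [pow_succ] at ha ⊢
    induction ha using Submodule.mul_induction_on' with
    | mem_mul_mem a ha a' ha' => rw [← smul_mul_smul_comm]; exact mul_mem (ih a ha) (h a' ha')
    | add a _ a' _ h h' => rw [add_smul]; exact add_mem h h'

variable {K : Type*} [Field K] [Algebra A K]

theorem exists_fg_subalgebra_smul_mem [IsNoetherianRing A] {I : Ideal A} {z b : K}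
    (hIz : ∀ a ∈ I, IsIntegral A (a • z)) (hb : IsIntegral A b) :
    ∃ S : Subalgebra A K, S.toSubmodule.FG ∧ b ∈ S ∧ ∀ a ∈ I, a • z ∈ S := by
  obtain ⟨g, hg⟩ := (IsNoetherian.noetherian I).map (LinearMap.toSpanSingleton A K z)
  refine ⟨Algebra.adjoin A (insert b g), fg_adjoin_of_finite (g.finite_toSet.insert b) ?_,
    Algebra.subset_adjoin (Set.mem_insert _ _), fun a ha ↦ ?_⟩
  · rintro w (rfl | hw)
    · exact hb
    · obtain ⟨a, ha, rfl⟩ := hg.le (Submodule.subset_span hw)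
      exact hIz a ha
  · exact Algebra.adjoin_mono (Set.subset_insert _ _)
      (Algebra.span_le_adjoin _ _ (hg.ge (Submodule.mem_map_of_mem ha)))

variable [IsNoetherianRing A] [IsFractionRing A K]

-- Let `c` be a common denominator of `A[b, I z]`; then `t = c * z ^ j` works for the largest `j`
-- such that `c * z ^ j` is integral.
theorem exists_mul_mem_idealTransform {I : Ideal A} {z b : K} (hz : ¬ IsIntegral A z)
    (hIz : ∀ a ∈ I, IsIntegral A (a • z)) (hb : IsIntegral A b) :
    ∃ t, IsIntegral A t ∧ ¬ IsIntegral A (t * z) ∧ t ∈ idealTransform I K ∧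
      t * b ∈ idealTransform I K ∧ t * z ∈ idealTransform I K := by
  obtain ⟨S, hS, hbS, hzS⟩ := exists_fg_subalgebra_smul_mem hIz hb
  obtain ⟨c, hc, hcS⟩ := FractionalIdeal.isFractional_of_fg (S := nonZeroDivisors A) hS
  have hmem (k : ℕ) {s : K} (hs : s ∈ S) : algebraMap A K c * z ^ k * s ∈ idealTransform I K := by
    refine ⟨k, fun a ha ↦ ?_⟩
    obtain ⟨r, hr⟩ := hcS _ (S.mul_mem (smul_pow_mem_of_smul_mem hzS k a ha) hs)
    refine Algebra.mem_bot.2 ⟨r, hr.trans ?_⟩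
    simp only [Algebra.smul_def]
    ring
  obtain ⟨j, hj, hj'⟩ := exists_isIntegral_and_not_isIntegral_mul hz
    (IsLocalization.map_units K (⟨c, hc⟩ : nonZeroDivisors A)).ne_zero
  refine ⟨_, hj, hj', ?_, hmem j hbS, ?_⟩
  · simpa using hmem j S.one_mem
  · simpa [pow_succ, ← mul_assoc] using hmem (j + 1) S.one_mem

end IdealTransform

section DenominatorIdeal

variable {A : Type*} [CommRing A]

theorem coe_mem_idealTransform_iff {E : Type*} [CommRing E] [Algebra A E] {I : Ideal A}
    {S : Subalgebra A E} {s : S} : (s : E) ∈ idealTransform I E ↔ s ∈ idealTransform I S := by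
  refine exists_congr fun n ↦ forall₂_congr fun a _ ↦ ?_
  simp only [Algebra.mem_bot, Set.mem_range, Subtype.ext_iff]
  rfl

variable (A) {K : Type*} [Field K] [Algebra A K]

/-- The ideal of denominators of `z : K` in the integral closure `B` of `A` in `K`:
the elements `b : B` such that `b * z ∈ B`. -/
def denomIdeal (z : K) : Ideal (integralClosure A K) where
  carrier := {b | IsIntegral A ((b : K) * z)}
  add_mem' {b b'} hb hb' := by
    simpa only [Set.mem_ofPred_eq, AddMemClass.coe_add, add_mul] using hb.add hb'
  zero_mem' := by
    simpa only [Set.mem_ofPred_eq, ZeroMemClass.coe_zero, zero_mul] using isIntegral_zero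
  smul_mem' b b' hb' := by
    simpa only [Set.mem_ofPred_eq, smul_eq_mul, MulMemClass.coe_mul, mul_assoc] using b.2.mul hb'

variable {A}

theorem mem_denomIdeal {z : K} {b : integralClosure A K} :
    b ∈ denomIdeal A z ↔ IsIntegral A ((b : K) * z) := Iff.rfl

theorem mul_mem_denomIdeal_iff {z : K} {b c : integralClosure A K} :
    b * c ∈ denomIdeal A z ↔ b ∈ denomIdeal A ((c : K) * z) := by
  simp only [mem_denomIdeal, MulMemClass.coe_mul, mul_assoc]

theorem mem_under_denomIdeal {z : K} {a : A} :
    a ∈ (denomIdeal A z).under A ↔ IsIntegral A (a • z) := by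
  rw [Ideal.mem_comap, mem_denomIdeal, Algebra.smul_def]
  rfl

theorem denomIdeal_ne_top_iff {z : K} : denomIdeal A z ≠ ⊤ ↔ ¬ IsIntegral A z := by
  rw [Ne, Ideal.eq_top_iff_one, mem_denomIdeal, OneMemClass.coe_one, one_mul]

theorem denomIdeal_le_denomIdeal_mul (z : K) (b : integralClosure A K) :
    denomIdeal A z ≤ denomIdeal A ((b : K) * z) :=
  fun _ hc ↦ mul_mem_denomIdeal_iff.1 (Ideal.mul_mem_right b _ hc)

theorem isPrime_denomIdeal_of_maximal {z : K} (hz : denomIdeal A z ≠ ⊤)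
    (hmax : ∀ b : integralClosure A K, denomIdeal A ((b : K) * z) ≠ ⊤ →
      denomIdeal A ((b : K) * z) ≤ denomIdeal A z) : (denomIdeal A z).IsPrime :=
  Ideal.isPrime_iff.2 ⟨hz, fun {_ c} hbc ↦ or_iff_not_imp_right.2 fun hc ↦
    hmax c (denomIdeal_ne_top_iff.2 hc) (mul_mem_denomIdeal_iff.1 hbc)⟩

theorem isPrime_under_denomIdeal_of_maximal {z : K} (hz : denomIdeal A z ≠ ⊤)
    (hmax : ∀ b : integralClosure A K, denomIdeal A ((b : K) * z) ≠ ⊤ →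
      (denomIdeal A ((b : K) * z)).under A ≤ (denomIdeal A z).under A) :
    ((denomIdeal A z).under A).IsPrime := by
  refine Ideal.isPrime_iff.2 ⟨Ideal.comap_ne_top _ hz, fun {a c} hac ↦
    or_iff_not_imp_right.2 fun hc ↦ hmax (algebraMap A _ c) (denomIdeal_ne_top_iff.2 hc) ?_⟩
  rw [Ideal.mem_comap, ← mul_mem_denomIdeal_iff, ← map_mul]
  exact hac

theorem mem_denomIdeal_mul_of_smul_mem {z : K}
    (hmax : ∀ b : integralClosure A K, denomIdeal A ((b : K) * z) ≠ ⊤ →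
      (denomIdeal A ((b : K) * z)).under A ≤ (denomIdeal A z).under A)
    {s : A} (hs : s ∉ (denomIdeal A z).under A) {b w : integralClosure A K}
    (hsw : s • w ∈ denomIdeal A ((b : K) * z)) : w ∈ denomIdeal A ((b : K) * z) := by
  by_contra hw
  refine hs (hmax (w * b) ?_ ?_)
  · rw [denomIdeal_ne_top_iff, MulMemClass.coe_mul, mul_assoc]
    exact hw
  · rw [Ideal.mem_comap, MulMemClass.coe_mul, mul_assoc, ← mul_mem_denomIdeal_iff,
      ← Algebra.smul_def]
    exact hsw

variable [IsFractionRing A K]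

theorem exists_mem_under_denomIdeal_ne_zero (z : K) : ∃ x ∈ (denomIdeal A z).under A, x ≠ 0 := by
  have : Nontrivial A := (algebraMap A K).domain_nontrivial
  obtain ⟨a, x, hx, rfl⟩ := IsFractionRing.div_surjective (A := A) z
  refine ⟨x, mem_under_denomIdeal.2 ?_, nonZeroDivisors.ne_zero hx⟩
  rw [Algebra.smul_def, mul_div_cancel₀ _ (IsLocalization.map_units K ⟨x, hx⟩).ne_zero]
  exact isIntegral_algebraMap

variable [IsNoetherianRing A]

theorem exists_mem_idealTransform_notMem_denomIdeal {I : Ideal A} {z : K}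
    (hz : denomIdeal A z ≠ ⊤) (hI : I ≤ (denomIdeal A z).under A) (b : integralClosure A K) :
    ∃ t ∈ idealTransform I (integralClosure A K), t ∉ denomIdeal A z ∧
      t * b ∈ idealTransform I (integralClosure A K) ∧ (t : K) * z ∈ idealTransform I K := by
  obtain ⟨t, ht, htz, htI, htb, htzI⟩ := exists_mul_mem_idealTransform
    (denomIdeal_ne_top_iff.1 hz) (fun a ha ↦ mem_under_denomIdeal.1 (hI ha)) b.2
  exact ⟨⟨t, ht⟩, coe_mem_idealTransform_iff.1 htI, htz,
    coe_mem_idealTransform_iff.1 htb, htzI⟩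

theorem isAssociatedPrime_under_denomIdeal (z : K) [hz : (denomIdeal A z).IsPrime] :
    (1 : Submodule A K).IsAssociatedPrime ((denomIdeal A z).under A) := by
  obtain ⟨t, -, htz, -, n, hn⟩ :=
    exists_mem_idealTransform_notMem_denomIdeal hz.ne_top le_rfl 1
  refine ⟨inferInstance, (t : K) * z, le_antisymm ?_ ?_⟩
  · intro a ha
    refine ⟨n, ?_⟩
    rw [Submodule.mem_colon_singleton, Submodule.mem_one]
    exact Algebra.mem_bot.1 (hn _ (Ideal.pow_mem_pow ha n))
  · refine hz.under A |>.isRadical.radical_le_iff.2 fun a ha ↦ ?_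
    rw [Submodule.mem_colon_singleton, Submodule.mem_one] at ha
    obtain ⟨r, hr⟩ := ha
    refine (hz.mem_or_mem (?_ : algebraMap A _ a * t ∈ denomIdeal A z)).resolve_right htz
    rw [mul_mem_denomIdeal_iff, ← Ideal.mem_comap]
    exact mem_under_denomIdeal.2 (hr ▸ isIntegral_algebraMap)

theorem mem_associatedPrimes_quotient_span_of_isAssociatedPrime_one {P : Ideal A}
    (hP : (1 : Submodule A K).IsAssociatedPrime P) {x : A} (hx : x ∈ P) (hx0 : x ≠ 0) :
    P ∈ associatedPrimes A (A ⧸ Ideal.span {x}) := by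
  obtain ⟨hPprime, w, hw⟩ := Submodule.isAssociatedPrime_iff.1 hP
  have hmem (a : A) : a ∈ P ↔ ∃ r, algebraMap A K r = a • w := by
    rw [hw, Submodule.mem_colon_singleton, Submodule.mem_one]
  obtain ⟨r, hr⟩ := (hmem x).1 hx
  refine isAssociatedPrime_iff.2 ⟨hPprime, Ideal.Quotient.mk _ r, ?_⟩
  ext a
  rw [Submodule.mem_colon_singleton, Submodule.mem_bot, hmem,
    show a • Ideal.Quotient.mk (Ideal.span {x}) r = Ideal.Quotient.mk _ (a * r) from rfl,
    Ideal.Quotient.eq_zero_iff_dvd]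
  refine exists_congr fun e ↦ ?_
  rw [← (IsFractionRing.injective A K).eq_iff, map_mul, map_mul, hr, Algebra.smul_def,
    Algebra.smul_def, mul_left_comm, eq_comm]
  exact (mul_right_inj' (by simpa using hx0)).symm

end DenominatorIdeal

section LocalFiniteness

variable {A M : Type*} [CommRing A] [AddCommGroup M] [Module A M]

theorem isArtinian_of_pow_maximalIdeal_le_annihilator [IsLocalRing A] [IsNoetherianRing A]
    [Module.Finite A M] {n : ℕ} (h : maximalIdeal A ^ n ≤ Module.annihilator A M) :
    IsArtinian A M := by
  let I := maximalIdeal A ^ n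
  rcases eq_or_ne I ⊤ with hI | hI
  · have : Subsingleton M := Module.annihilator_eq_top_iff.1 (top_le_iff.1 (hI.ge.trans h))
    infer_instance
  have : Nontrivial (A ⧸ I) := Ideal.Quotient.nontrivial_iff.2 hI
  have : IsLocalRing (A ⧸ I) := .of_surjective' (Ideal.Quotient.mk I) Ideal.Quotient.mk_surjective
  have : IsArtinianRing (A ⧸ I) := by
    refine (isArtinianRing_iff_isNilpotent_maximalIdeal _).2 ⟨n, ?_⟩
    rw [← map_maximalIdeal_of_surjective (Ideal.Quotient.mk I) Ideal.Quotient.mk_surjective,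
      ← Ideal.map_pow]
    exact Ideal.map_quotient_self I
  let _ : Module (A ⧸ I) M := Module.IsTorsionBySet.module (R := A) (I := I) fun m a ↦
    Module.mem_annihilator.1 (h a.2) m
  have : Module.Finite (A ⧸ I) M := Module.Finite.of_restrictScalars_finite A _ _
  exact isArtinian_of_surjective_algebraMap (R := A ⧸ I) Ideal.Quotient.mk_surjective

theorem exists_pow_le_annihilator [Module.Finite A M] {I : Ideal A}
    (h : ∀ m : M, ∃ n : ℕ, ∀ a ∈ I ^ n, a • m = 0) : ∃ n, I ^ n ≤ Module.annihilator A M := by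
  obtain ⟨g, hg⟩ := Module.Finite.fg_top (R := A) (M := M)
  choose n hn using h
  refine ⟨g.sup n, fun a ha ↦ ?_⟩
  rw [← Submodule.annihilator_top, ← hg, Submodule.mem_annihilator_span]
  exact fun m ↦ hn m a (Ideal.pow_le_pow_right (Finset.le_sup m.2) ha)

variable [IsNoetherianRing A] (P : Ideal A) [P.IsPrime]

theorem exists_smul_mem_of_antitone [Module.Finite A M]
    (h : ∀ m : M, ∃ n : ℕ, ∀ a ∈ P ^ n, a • m = 0) {U : ℕ → Submodule A M} (hU : Antitone U) :
    ∃ N, ∀ n ≥ N, ∀ u ∈ U n, ∃ s ∉ P, s • u ∈ U (n + 1) := by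
  obtain ⟨n, hn⟩ := exists_pow_le_annihilator h
  have hart : IsArtinian (Localization.AtPrime P) (LocalizedModule P.primeCompl M) := by
    refine isArtinian_of_pow_maximalIdeal_le_annihilator (n := n) ?_
    rw [← Localization.AtPrime.map_eq_maximalIdeal, ← Ideal.map_pow, Ideal.map_le_iff_le_comap]
    refine fun a ha ↦ Module.mem_annihilator.2 fun m ↦ ?_
    induction m using LocalizedModule.induction_on with
    | h m s =>
      rw [algebraMap_smul, LocalizedModule.smul'_mk, Module.mem_annihilator.1 (hn ha),
        LocalizedModule.zero_mk]
  obtain ⟨N, hN⟩ := IsArtinian.monotone_stabilizes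
    (⟨fun n ↦ OrderDual.toDual ((U n).localized P.primeCompl), fun i j hij ↦ by
      rintro _ ⟨u, hu, s, rfl⟩
      exact ⟨u, hU hij hu, s, rfl⟩⟩ :
      ℕ →o (Submodule (Localization.AtPrime P) (LocalizedModule P.primeCompl M))ᵒᵈ)
  refine ⟨N, fun n hn u hu ↦ ?_⟩
  have hloc : (U n).localized P.primeCompl = (U (n + 1)).localized P.primeCompl :=
    (hN n hn).symm.trans (hN (n + 1) (hn.trans n.le_succ))
  have hu' : LocalizedModule.mk u 1 ∈ (U (n + 1)).localized P.primeCompl :=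
    hloc.le ⟨u, hu, 1, (IsLocalizedModule.mk_eq_mk' _ _).symm⟩
  obtain ⟨v, hv, s, hvs⟩ := hu'
  rw [← IsLocalizedModule.mk_eq_mk', LocalizedModule.mk_eq] at hvs
  obtain ⟨t, ht⟩ := hvs
  refine ⟨t * s, (t * s).2, ?_⟩
  rw [mul_smul]
  exact ht ▸ (U (n + 1)).smul_mem _ ((U (n + 1)).smul_mem _ hv)

-- The submodules `x ^ n M ∩ M[x]` stabilise locally at `P`, since `M[x]` has finite length there.
theorem exists_smul_mem_torsionBy_pow_sup (h : ∀ m : M, ∃ n : ℕ, ∀ a ∈ P ^ n, a • m = 0)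
    {x : A} (hx : x ∈ P) [Module.Finite A (Submodule.torsionBy A M x)] :
    ∃ N, ∀ m : M, ∃ s ∉ P, s • m ∈ Submodule.torsionBy A M (x ^ N) ⊔ P • ⊤ := by
  obtain ⟨N, hN⟩ := exists_smul_mem_of_antitone P (M := Submodule.torsionBy A M x)
    (fun m ↦ (h m).imp fun _ hn a ha ↦ Subtype.ext (hn a ha))
    (U := fun n ↦ (LinearMap.range (LinearMap.lsmul A M (x ^ n))).comap (Submodule.subtype _))
    (antitone_nat_of_succ_le fun n ↦ Submodule.comap_mono <| by
      rintro _ ⟨m, rfl⟩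
      exact ⟨x • m, by simp [pow_succ, mul_smul, smul_comm x]⟩)
  have key (k : ℕ) : ∀ m : M, x ^ (N + k) • m = 0 →
      ∃ s ∉ P, s • m ∈ Submodule.torsionBy A M (x ^ N) ⊔ P • ⊤ := by
    induction k with
    | zero => exact fun m hm ↦ ⟨1, Ideal.one_notMem P, by
        rw [one_smul]; exact Submodule.mem_sup_left hm⟩
    | succ k ih =>
      intro m hm
      obtain ⟨s, hs, v, hv⟩ := hN (N + k) (Nat.le_add_right _ _)
        ⟨x ^ (N + k) • m, by rwa [Submodule.mem_torsionBy_iff, ← mul_smul, ← pow_succ']⟩ ⟨m, rfl⟩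
      obtain ⟨s', hs', hmem⟩ := ih (s • m - x • v) <| by
        rw [smul_sub, ← mul_smul _ x, ← pow_succ, smul_comm, sub_eq_zero]
        exact hv.symm
      refine ⟨s' * s, ‹P.IsPrime›.mul_notMem hs' hs, ?_⟩
      rw [mul_smul, ← sub_add_cancel (s • m) (x • v), smul_add, smul_comm s' x v]
      exact add_mem hmem <| Submodule.mem_sup_right <| Submodule.smul_mem_smul hx trivial
  refine ⟨N, fun m ↦ ?_⟩
  obtain ⟨n, hn⟩ := h m
  exact key n m (by rw [pow_add, mul_smul, hn _ (Ideal.pow_mem_pow hx n), smul_zero])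

end LocalFiniteness

section LocalFinitenessOverSubmodule

variable {A C : Type*} [CommRing A]

theorem torsionBy_quotient_eq_map [AddCommGroup C] [Module A C] (L : Submodule A C) (a : A) :
    Submodule.torsionBy A (C ⧸ L) a = (L.comap (LinearMap.lsmul A C a)).map L.mkQ := by
  ext m
  obtain ⟨w, rfl⟩ := L.mkQ_surjective m
  rw [Submodule.mem_torsionBy_iff, ← map_smul, ← Submodule.mem_comap, Submodule.comap_map_mkQ,
    ← LinearMap.mem_ker, Submodule.ker_mkQ, sup_eq_right.2]
  · rfl
  · exact fun c hc ↦ L.smul_mem a hc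

theorem exists_fg_smul_mem_sup_smul_top [AddCommGroup C] [Module A C] [IsNoetherianRing A]
    (P : Ideal A) [P.IsPrime] {L : Submodule A C} (hL : L.FG)
    (h : ∀ w : C, ∃ n : ℕ, ∀ a ∈ P ^ n, a • w ∈ L) {x : A} (hx : x ∈ P) (hxC : IsSMulRegular C x) :
    ∃ F : Submodule A C, F.FG ∧ ∀ w : C, ∃ s ∉ P, s • w ∈ F ⊔ P • ⊤ := by
  have hfg (n : ℕ) : (L.comap (LinearMap.lsmul A C (x ^ n))).FG :=
    Submodule.fg_of_fg_map_injective (LinearMap.lsmul A C (x ^ n)) (hxC.pow n)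
      (Submodule.FG.of_le hL (Submodule.map_comap_le _ _))
  have : Module.Finite A (Submodule.torsionBy A (C ⧸ L) x) := by
    rw [torsionBy_quotient_eq_map, ← pow_one x]
    exact Module.Finite.iff_fg.2 ((hfg 1).map _)
  obtain ⟨N, hN⟩ := exists_smul_mem_torsionBy_pow_sup P (M := C ⧸ L) (fun m ↦ by
    obtain ⟨w, rfl⟩ := L.mkQ_surjective m
    refine (h w).imp fun n hn a ha ↦ ?_
    rw [← map_smul]
    exact (Submodule.Quotient.mk_eq_zero L).2 (hn a ha)) hx
  refine ⟨_, hfg N, fun w ↦ (hN (L.mkQ w)).imp fun s ⟨hs, hsw⟩ ↦ ⟨hs, ?_⟩⟩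
  have hLN : L ≤ L.comap (LinearMap.lsmul A C (x ^ N)) := fun c hc ↦ L.smul_mem _ hc
  have htop : (⊤ : Submodule A (C ⧸ L)) = Submodule.map L.mkQ ⊤ := by
    rw [Submodule.map_top, Submodule.range_mkQ]
  rw [torsionBy_quotient_eq_map, htop, ← Submodule.map_smul'', ← Submodule.map_sup, ← map_smul,
    ← Submodule.mem_comap, Submodule.comap_map_mkQ, ← sup_assoc,
    sup_eq_right.2 hLN] at hsw
  exact hsw

theorem finite_primesOver_of_fg_smul_mem [CommRing C] [Algebra A C] {P : Ideal A} [P.IsPrime]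
    {F : Submodule A C} (hF : F.FG) (h : ∀ w : C, ∃ s ∉ P, s • w ∈ F ⊔ P • ⊤) :
    (P.primesOver C).Finite := by
  obtain ⟨g, hg⟩ := hF
  let ι : C →ₗ[A] P.Fiber C := TensorProduct.mk A P.ResidueField C 1
  let V : Submodule P.ResidueField (P.Fiber C) := Submodule.span _ (ι '' g)
  have hFV : F ⊔ P • ⊤ ≤ (V.restrictScalars A).comap ι := by
    refine sup_le (hg ▸ Submodule.span_le.2 fun c hc ↦ Submodule.subset_span ⟨c, hc, rfl⟩)
      (Submodule.smul_le.2 fun a ha c _ ↦ ?_)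
    have : ι (a • c) = 0 := by
      rw [map_smul, TensorProduct.mk_apply, TensorProduct.smul_tmul', Algebra.smul_def,
        Ideal.algebraMap_residueField_eq_zero.2 ha, zero_mul, TensorProduct.zero_tmul]
    rw [Submodule.mem_comap, this]
    exact zero_mem _
  have hV : V = ⊤ := by
    refine eq_top_iff.2 fun y _ ↦ ?_
    obtain ⟨r, hr, w, hw⟩ := Ideal.Fiber.exists_smul_eq_one_tmul P y
    obtain ⟨s, hs, hsw⟩ := h w
    have hmem : algebraMap A P.ResidueField (s * r) • y ∈ V := by
      rw [algebraMap_smul, mul_smul, hw]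
      have hι : ι (s • w) ∈ V := hFV hsw
      rwa [map_smul] at hι
    refine (V.smul_mem_iff ?_).1 hmem
    rw [Ne, Ideal.algebraMap_residueField_eq_zero]
    exact ‹P.IsPrime›.mul_notMem hs hr
  have : Module.Finite P.ResidueField (P.Fiber C) :=
    ⟨hV ▸ Submodule.fg_span (g.finite_toSet.image _)⟩
  have : IsArtinianRing (P.Fiber C) := .of_finite P.ResidueField _
  exact Set.finite_coe_iff.1
    ((PrimeSpectrum.primesOverOrderIsoFiber A C P).toEquiv.finite_iff.2 inferInstance)

end LocalFinitenessOverSubmodule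

section PrimeDenominatorIdeals

theorem smul_mem_of_mem_under {A B : Type*} [CommRing A] [CommRing B] [Algebra A B] {I : Ideal B}
    {a : A} (ha : a ∈ I.under A) (b : B) : a • b ∈ I :=
  Algebra.smul_def a b ▸ I.mul_mem_right b ha

variable {A : Type*} [CommRing A] [IsNoetherianRing A]

theorem exists_fg_smul_mem_idealTransform (P : Ideal A) [P.IsPrime] {E : Type*} [CommRing E]
    [Algebra A E] {x : A} (hx : x ∈ P) (hxE : IsSMulRegular E x) :
    ∃ F : Submodule A (idealTransform P E), F.FG ∧ ∀ w, ∃ s ∉ P, s • w ∈ F ⊔ P • ⊤ := by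
  have hxC : IsSMulRegular (idealTransform P E) x :=
    hxE.of_injective (idealTransform P E).val.toLinearMap Subtype.val_injective
  refine exists_fg_smul_mem_sup_smul_top P (L := 1)
    ⟨{1}, by rw [Finset.coe_singleton, Submodule.one_eq_span]⟩ (fun w ↦ ?_) hx hxC
  obtain ⟨n, hn⟩ := coe_mem_idealTransform_iff.1 w.2
  exact ⟨n, fun a ha ↦ Submodule.mem_one.2 (Algebra.mem_bot.1 (hn a ha))⟩

variable {K : Type*} [Field K] [Algebra A K]

theorem exists_mul_under_denomIdeal_maximal {y : K} (hy : ¬ IsIntegral A y) :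
    ∃ b : integralClosure A K, denomIdeal A ((b : K) * y) ≠ ⊤ ∧
      ∀ c : integralClosure A K, denomIdeal A ((c : K) * (b * y)) ≠ ⊤ →
        (denomIdeal A ((c : K) * (b * y))).under A ≤ (denomIdeal A ((b : K) * y)).under A := by
  obtain ⟨_, ⟨b, hb, rfl⟩, hmax⟩ := exists_maximal_of_wellFoundedGT
    (fun P ↦ ∃ b : integralClosure A K, denomIdeal A ((b : K) * y) ≠ ⊤ ∧
      (denomIdeal A ((b : K) * y)).under A = P)
    ⟨_, 1, by rwa [OneMemClass.coe_one, one_mul, denomIdeal_ne_top_iff], rfl⟩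
  refine ⟨b, hb, fun c hc ↦ ?_⟩
  exact hmax ⟨c * b, by simpa only [MulMemClass.coe_mul, mul_assoc] using hc,
    by simp only [MulMemClass.coe_mul, mul_assoc]⟩
    (Ideal.comap_mono (denomIdeal_le_denomIdeal_mul _ c))

variable [IsFractionRing A K]

theorem le_denomIdeal_of_comap_val_le {I : Ideal A} {z : K} (hI : I ≤ (denomIdeal A z).under A)
    {J : Ideal (integralClosure A K)}
    (h : J.comap (idealTransform I (integralClosure A K)).val ≤
      (denomIdeal A z).comap (idealTransform I (integralClosure A K)).val) :
    J ≤ denomIdeal A z := by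
  intro b hb
  by_contra hbz
  obtain ⟨t, -, htz, htb, -⟩ := exists_mem_idealTransform_notMem_denomIdeal
    (denomIdeal_ne_top_iff.2 hbz)
    (hI.trans (Ideal.comap_mono (denomIdeal_le_denomIdeal_mul z b))) b
  exact htz (mul_mem_denomIdeal_iff.1 (h (x := ⟨t * b, htb⟩) (J.mul_mem_left t hb)))

theorem exists_fg_smul_mem_idealTransform_under (z : K) [((denomIdeal A z).under A).IsPrime] :
    ∃ F : Submodule A (idealTransform ((denomIdeal A z).under A) (integralClosure A K)),
      F.FG ∧ ∀ w, ∃ s ∉ (denomIdeal A z).under A, s • w ∈ F ⊔ (denomIdeal A z).under A • ⊤ := by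
  have : IsDomain A := (IsFractionRing.injective A K).isDomain
  obtain ⟨x, hx, hx0⟩ := exists_mem_under_denomIdeal_ne_zero (A := A) z
  exact exists_fg_smul_mem_idealTransform _ hx (.of_ne_zero hx0)

variable (A K) in
/-- The prime ideals of the integral closure `B` of `A` in `K` of the form
`{b : B | b * z ∈ B}` with `z : K`. They play the role of the height one primes of `B`. -/
def primeDenomIdeals : Set (Ideal (integralClosure A K)) :=
  {Q | Q.IsPrime ∧ ∃ z : K, denomIdeal A z = Q}

theorem finite_primeDenomIdeals_under_eq (P : Ideal A) :
    {Q ∈ primeDenomIdeals A K | Q.under A = P}.Finite := by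
  rcases Set.eq_empty_or_nonempty {Q ∈ primeDenomIdeals A K | Q.under A = P} with h | h
  · exact h ▸ Set.finite_empty
  obtain ⟨_, ⟨hz, z, rfl⟩, rfl⟩ := h
  obtain ⟨F, hF, hFs⟩ := exists_fg_smul_mem_idealTransform_under (A := A) z
  refine Set.Finite.of_injOn (f := fun Q ↦ Q.comap (idealTransform _ _).val) ?_ ?_
    (finite_primesOver_of_fg_smul_mem hF hFs)
  · rintro Q ⟨⟨hQ, -⟩, hQP⟩
    exact ⟨inferInstance, ⟨hQP.symm⟩⟩
  · rintro _ ⟨⟨-, z, rfl⟩, hz⟩ _ ⟨⟨-, z', rfl⟩, hz'⟩ h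
    exact le_antisymm (le_denomIdeal_of_comap_val_le hz'.ge h.le)
      (le_denomIdeal_of_comap_val_le hz.ge h.ge)

theorem finite_primeDenomIdeals_mem {x : A} (hx : x ≠ 0) :
    {Q ∈ primeDenomIdeals A K | algebraMap A _ x ∈ Q}.Finite := by
  refine ((associatedPrimes.finite A (A ⧸ Ideal.span {x})).biUnion fun P _ ↦
    finite_primeDenomIdeals_under_eq P).subset ?_
  rintro _ ⟨⟨hz, z, rfl⟩, hxz⟩
  exact Set.mem_biUnion (mem_associatedPrimes_quotient_span_of_isAssociatedPrime_one
    (isAssociatedPrime_under_denomIdeal z) hxz hx) ⟨⟨hz, z, rfl⟩, rfl⟩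

-- Near `P := (denomIdeal A z).under A`, an ideal `denomIdeal A (b * z)` is determined by its trace
-- on a finitely generated `A`-module, so there is a maximal one.
theorem exists_isPrime_denomIdeal_mul_of_under_maximal {z : K} (hz : denomIdeal A z ≠ ⊤)
    (hmax : ∀ b : integralClosure A K, denomIdeal A ((b : K) * z) ≠ ⊤ →
      (denomIdeal A ((b : K) * z)).under A ≤ (denomIdeal A z).under A) :
    ∃ b : integralClosure A K, (denomIdeal A ((b : K) * z)).IsPrime := by
  have hP := isPrime_under_denomIdeal_of_maximal hz hmax
  obtain ⟨F, hF, hFs⟩ := exists_fg_smul_mem_idealTransform_under (A := A) z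
  have hPle (b : integralClosure A K) :
      (denomIdeal A z).under A ≤ (denomIdeal A ((b : K) * z)).under A :=
    Ideal.comap_mono (denomIdeal_le_denomIdeal_mul z b)
  let C := idealTransform ((denomIdeal A z).under A) (integralClosure A K)
  let onC (Q : Ideal (integralClosure A K)) : Submodule A C := (Q.comap C.val).restrictScalars A
  have hPC {Q : Ideal (integralClosure A K)} (hQ : (denomIdeal A z).under A ≤ Q.under A) :
      (denomIdeal A z).under A • ⊤ ≤ onC Q :=
    Submodule.smul_le.2 fun a ha c _ ↦
      smul_mem_of_mem_under (hQ ha) (c : integralClosure A K)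
  have : IsNoetherian A F := isNoetherian_of_fg_of_noetherian F hF
  obtain ⟨_, ⟨b, hb, rfl⟩, hbmax⟩ := exists_maximal_of_wellFoundedGT
    (fun V ↦ ∃ b : integralClosure A K, denomIdeal A ((b : K) * z) ≠ ⊤ ∧
      (onC (denomIdeal A ((b : K) * z))).comap F.subtype = V)
    ⟨_, 1, by rwa [OneMemClass.coe_one, one_mul], rfl⟩
  refine ⟨b, isPrime_denomIdeal_of_maximal hb fun c hc ↦
    le_denomIdeal_of_comap_val_le (hPle b) fun w hw ↦ ?_⟩
  obtain ⟨s, hs, hsw⟩ := hFs w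
  obtain ⟨f, hf, p, hp, hfp⟩ := Submodule.mem_sup.1 hsw
  have hle := denomIdeal_le_denomIdeal_mul ((b : K) * z) c
  have hfc : f ∈ onC (denomIdeal A ((c : K) * (b * z))) := by
    rw [eq_sub_of_add_eq hfp]
    exact sub_mem (Submodule.smul_mem _ s hw) (hPC ((hPle b).trans (Ideal.comap_mono hle)) hp)
  have hfb : f ∈ onC (denomIdeal A ((b : K) * z)) := by
    refine hbmax ⟨c * b, ?_, rfl⟩ (fun _ h ↦ ?_) (x := ⟨f, hf⟩) ?_
    all_goals rw [MulMemClass.coe_mul, mul_assoc]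
    exacts [hc, hle h, hfc]
  have hswb : s • w ∈ onC (denomIdeal A ((b : K) * z)) := hfp ▸ add_mem hfb (hPC (hPle b) hp)
  exact mem_denomIdeal_mul_of_smul_mem hmax hs hswb

theorem exists_isPrime_denomIdeal_mul {y : K} (hy : ¬ IsIntegral A y) :
    ∃ b : integralClosure A K, (denomIdeal A ((b : K) * y)).IsPrime := by
  obtain ⟨b, hb, hmax⟩ := exists_mul_under_denomIdeal_maximal hy
  obtain ⟨c, hc⟩ := exists_isPrime_denomIdeal_mul_of_under_maximal hb hmax
  exact ⟨c * b, by rwa [MulMemClass.coe_mul, mul_assoc]⟩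

theorem exists_fg_smul_mk_mem_of_mem_primeDenomIdeals {Q : Ideal (integralClosure A K)}
    (hQ : Q ∈ primeDenomIdeals A K) :
    ∃ G : Submodule A (integralClosure A K ⧸ Q), G.FG ∧
      ∀ w ∈ idealTransform (Q.under A) (integralClosure A K), ∃ s ∉ Q.under A,
        s • Ideal.Quotient.mk Q w ∈ G := by
  obtain ⟨hz, z, rfl⟩ := hQ
  obtain ⟨F, hF, hFs⟩ := exists_fg_smul_mem_idealTransform_under (A := A) z
  let π := (Ideal.Quotient.mkₐ A (denomIdeal A z)).comp
    (idealTransform ((denomIdeal A z).under A) (integralClosure A K)).val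
  refine ⟨F.map π.toLinearMap, hF.map _, fun w hw ↦ ?_⟩
  obtain ⟨s, hs, hsw⟩ := hFs ⟨w, hw⟩
  have hker : (denomIdeal A z).under A • ⊤ ≤ (F.map π.toLinearMap).comap π.toLinearMap :=
    Submodule.smul_le.2 fun a ha c _ ↦ by
      have hac : π (a • c) = 0 := Ideal.Quotient.eq_zero_iff_mem.2
        (smul_mem_of_mem_under ha (c : integralClosure A K))
      rw [Submodule.mem_comap, AlgHom.toLinearMap_apply, hac]
      exact zero_mem _
  exact ⟨s, hs, sup_le (Submodule.le_comap_map π.toLinearMap F) hker hsw⟩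

theorem exists_finite_subalgebra_quotient_of_mem_primeDenomIdeals {Q : Ideal (integralClosure A K)}
    (hQ : Q ∈ primeDenomIdeals A K) :
    ∃ D : Subalgebra A (integralClosure A K ⧸ Q), Module.Finite A D ∧
      ∀ e, ∃ d ∈ D, d ≠ 0 ∧ d * e ∈ D := by
  obtain ⟨G, ⟨g, rfl⟩, hG⟩ := exists_fg_smul_mk_mem_of_mem_primeDenomIdeals hQ
  obtain ⟨hz, z, rfl⟩ := hQ
  refine ⟨Algebra.adjoin A g, Module.Finite.iff_fg.2 (fg_adjoin_of_finite g.finite_toSet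
    fun e _ ↦ Algebra.IsIntegral.isIntegral e), fun e ↦ ?_⟩
  obtain ⟨b, rfl⟩ := Ideal.Quotient.mk_surjective e
  obtain ⟨t, ht, htz, htb, -⟩ :=
    exists_mem_idealTransform_notMem_denomIdeal hz.ne_top le_rfl b
  obtain ⟨s, hs, hst⟩ := hG t ht
  obtain ⟨s', hs', hst'⟩ := hG _ htb
  have hD := Algebra.span_le_adjoin A (g : Set (integralClosure A K ⧸ denomIdeal A z))
  refine ⟨s' • s • Ideal.Quotient.mk _ t, Subalgebra.smul_mem _ (hD hst) s', ?_, ?_⟩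
  · rw [← mul_smul, Ne, ← Ideal.Quotient.mkₐ_eq_mk A, ← map_smul, Ideal.Quotient.mkₐ_eq_mk,
      Ideal.Quotient.eq_zero_iff_mem, Algebra.smul_def]
    exact hz.mul_notMem (hz.under A |>.mul_notMem hs' hs) htz
  · rw [smul_comm, smul_mul_assoc, smul_mul_assoc, ← map_mul]
    exact Subalgebra.smul_mem _ (hD hst') s

end PrimeDenominatorIdeals

section NoetherianQuotients

variable {R M M' : Type*} [CommRing R] [AddCommGroup M] [Module R M] [AddCommGroup M'] [Module R M']

theorem isNoetherian_quotient_of_le {N N' : Submodule R M} [IsNoetherian R (M ⧸ N)] (h : N ≤ N') :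
    IsNoetherian R (M ⧸ N') :=
  isNoetherian_of_surjective (Submodule.factor h)
    (LinearMap.range_eq_top.2 (Submodule.factor_surjective h))

theorem isNoetherian_quotient_map_subtype_ker {N : Submodule R M} [IsNoetherian R (M ⧸ N)]
    [IsNoetherian R M'] (φ : N →ₗ[R] M') :
    IsNoetherian R (M ⧸ (LinearMap.ker φ).map N.subtype) := by
  have : IsNoetherian R (N ⧸ LinearMap.ker φ) :=
    isNoetherian_of_linearEquiv φ.quotKerEquivRange.symm
  have hle : (LinearMap.ker φ).map N.subtype ≤ N := Submodule.map_subtype_le _ _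
  refine isNoetherian_of_range_eq_ker
    ((LinearMap.ker φ).mapQ _ N.subtype (Submodule.le_comap_map _ _)) (Submodule.factor hle) ?_
  rw [Submodule.range_mapQ, Submodule.range_subtype, Submodule.factor, Submodule.mapQ,
    Submodule.ker_liftQ, LinearMap.comp_id, Submodule.ker_mkQ]

theorem isNoetherian_quotient_finset_inf {ι : Type*} (N : ι → Submodule R M) (s : Finset ι)
    (h : ∀ i ∈ s, IsNoetherian R (M ⧸ N i)) : IsNoetherian R (M ⧸ s.inf N) := by
  classical
  induction s using Finset.induction_on with
  | empty =>
    rw [Finset.inf_empty]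
    infer_instance
  | insert i s _ ih =>
    rw [Finset.inf_insert, inf_comm]
    have := h i (Finset.mem_insert_self i s)
    have := ih fun j hj ↦ h j (Finset.mem_insert_of_mem hj)
    have := isNoetherian_quotient_map_subtype_ker ((N i).mkQ ∘ₗ (s.inf N).subtype)
    rwa [LinearMap.ker_comp, Submodule.ker_mkQ, Submodule.map_comap_subtype] at this

end NoetherianQuotients

section PrincipalQuotients

variable {A : Type*} [CommRing A] {K : Type*} [Field K] [Algebra A K]

-- Multiplication by `z ^ n` embeds the successive quotients of this chain into
-- `integralClosure A K ⧸ denomIdeal A z`.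
theorem isNoetherian_quotient_inf_denomIdeal_pow {z : K}
    [IsNoetherian A (integralClosure A K ⧸ denomIdeal A z)] (n : ℕ) :
    IsNoetherian A (integralClosure A K ⧸ (Finset.range (n + 1)).inf fun k ↦
      (denomIdeal A (z ^ k)).restrictScalars A) := by
  induction n with
  | zero =>
    have htop : (⊤ : Submodule A (integralClosure A K)) ≤ (Finset.range (0 + 1)).inf fun k ↦
        (denomIdeal A (z ^ k)).restrictScalars A := by
      intro b _
      simpa [mem_denomIdeal] using mem_integralClosure_iff A K |>.1 b.2
    exact isNoetherian_quotient_of_le htop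
  | succ n ih =>
    let N := (Finset.range (n + 1)).inf fun k ↦ (denomIdeal A (z ^ k)).restrictScalars A
    have hN : N ≤ (denomIdeal A (z ^ n)).restrictScalars A :=
      Finset.inf_le (Finset.self_mem_range_succ n)
    let μ : N →ₗ[A] integralClosure A K :=
      { toFun b := ⟨(b : K) * z ^ n, hN b.2⟩
        map_add' b b' := Subtype.ext (add_mul _ _ _)
        map_smul' a b := Subtype.ext (smul_mul_assoc _ _ _) }
    have : IsNoetherian A (integralClosure A K ⧸ N) := ih
    let φ := (Ideal.Quotient.mkₐ A (denomIdeal A z)).toLinearMap ∘ₗ μ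
    have := isNoetherian_quotient_map_subtype_ker φ
    rw [Finset.range_add_one, Finset.inf_insert]
    refine isNoetherian_quotient_of_le (N := (LinearMap.ker φ).map N.subtype) ?_
    rintro _ ⟨b, hb, rfl⟩
    refine ⟨?_, b.2⟩
    have hbz : IsIntegral A ((b : K) * z ^ n * z) := Ideal.Quotient.eq_zero_iff_mem.1 hb
    rwa [mul_assoc, ← pow_succ] at hbz

variable [IsNoetherianRing A]

theorem exists_isNoetherian_quotient_dvd_mul {Q : Ideal (integralClosure A K)}
    (hQ : Q ∈ primeDenomIdeals A K) [IsNoetherian A (integralClosure A K ⧸ Q)] {x : A}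
    (hx : algebraMap A K x ≠ 0) :
    ∃ N : Submodule A (integralClosure A K), IsNoetherian A (integralClosure A K ⧸ N) ∧
      ∃ t ∉ Q, ∀ b ∈ N, algebraMap A _ x ∣ t * b := by
  obtain ⟨hz, z, rfl⟩ := hQ
  obtain ⟨n, hn, hn'⟩ :=
    exists_isIntegral_and_not_isIntegral_mul (denomIdeal_ne_top_iff.1 hz.ne_top) hx
  refine ⟨_, isNoetherian_quotient_inf_denomIdeal_pow (z := z) n, ⟨_, hn⟩, hn', fun b hb ↦ ?_⟩
  have hbn : IsIntegral A ((b : K) * z ^ n) :=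
    Finset.inf_le (f := fun k ↦ (denomIdeal A (z ^ k)).restrictScalars A)
      (Finset.self_mem_range_succ n) hb
  exact ⟨⟨_, hbn⟩, Subtype.ext (by simp [mul_assoc, mul_comm])⟩

variable [IsFractionRing A K]

theorem algebraMap_dvd_of_forall_mem_primeDenomIdeals {x : A} (hx : x ≠ 0)
    {b : integralClosure A K} (h : ∀ Q ∈ primeDenomIdeals A K, algebraMap A _ x ∈ Q →
      ∃ t ∉ Q, algebraMap A _ x ∣ t * b) : algebraMap A _ x ∣ b := by
  have hxK : algebraMap A K x ≠ 0 := by simpa using hx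
  have hxy : algebraMap A K x * ((b : K) / algebraMap A K x) = b := mul_div_cancel₀ _ hxK
  by_contra hbx
  have hy : ¬ IsIntegral A ((b : K) / algebraMap A K x) := fun hy ↦
    hbx ⟨⟨_, hy⟩, Subtype.ext hxy.symm⟩
  obtain ⟨c, hc⟩ := exists_isPrime_denomIdeal_mul hy
  have hle := denomIdeal_le_denomIdeal_mul ((b : K) / algebraMap A K x) c
  have hxQ : algebraMap A _ x ∈ denomIdeal A ((b : K) / algebraMap A K x) := by
    rw [mem_denomIdeal]
    exact hxy.symm ▸ b.2
  obtain ⟨t, ht, d, hd⟩ := h _ ⟨hc, _, rfl⟩ (hle hxQ)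
  refine ht (hle ?_)
  have htd : (t : K) * b = algebraMap A K x * d := congrArg Subtype.val hd
  rw [mem_denomIdeal, ← mul_div_assoc, htd, mul_div_cancel_left₀ _ hxK]
  exact d.2

theorem isNoetherian_quotient_span_algebraMap {x : A} (hx : x ≠ 0)
    (h : ∀ Q ∈ primeDenomIdeals A K, algebraMap A _ x ∈ Q →
      IsNoetherian A (integralClosure A K ⧸ Q)) :
    IsNoetherian A (integralClosure A K ⧸ Ideal.span {algebraMap A (integralClosure A K) x}) := by
  have hex (Q : Ideal (integralClosure A K))
      (hQ : Q ∈ {Q ∈ primeDenomIdeals A K | algebraMap A _ x ∈ Q}) :=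
    have := h Q hQ.1 hQ.2
    exists_isNoetherian_quotient_dvd_mul (x := x) hQ.1 (by simpa using hx)
  choose! N hN t htQ ht using hex
  have hfin := finite_primeDenomIdeals_mem (K := K) hx
  have := isNoetherian_quotient_finset_inf N hfin.toFinset
    fun Q hQ ↦ hN Q (hfin.mem_toFinset.1 hQ)
  have hle : hfin.toFinset.inf N ≤
      (Ideal.span {algebraMap A (integralClosure A K) x}).restrictScalars A := fun b hb ↦
    Ideal.mem_span_singleton.2 <| algebraMap_dvd_of_forall_mem_primeDenomIdeals hx fun Q hQ hxQ ↦
      ⟨t Q, htQ Q ⟨hQ, hxQ⟩, ht Q ⟨hQ, hxQ⟩ b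
        (Finset.inf_le (f := N) (hfin.mem_toFinset.2 ⟨hQ, hxQ⟩) hb)⟩
  have := isNoetherian_quotient_of_le hle
  exact isNoetherian_of_linearEquiv (Submodule.Quotient.restrictScalarsEquiv A _)

end PrincipalQuotients

section AdicFiniteness

variable {R M : Type*} [CommRing R] [AddCommGroup M] [Module R M]

theorem mem_smul_top_pi_iff {ι : Type*} [Finite ι] {I : Ideal R} {f : ι → R} :
    f ∈ (I • ⊤ : Submodule R (ι → R)) ↔ ∀ i, f i ∈ I := by
  classical
  have := Fintype.ofFinite ι
  refine ⟨fun hf i ↦ ?_, fun hf ↦ ?_⟩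
  · refine Submodule.smul_induction_on hf (fun a ha g _ ↦ ?_) fun g h hg hh ↦ I.add_mem hg hh
    exact I.mul_mem_right (g i) ha
  · rw [pi_eq_sum_univ' f]
    exact sum_mem fun i _ ↦ Submodule.smul_mem_smul (hf i) trivial

theorem isPrecomplete_pi (ι : Type*) [Finite ι] (I : Ideal R) [IsPrecomplete I R] :
    IsPrecomplete I (ι → R) := by
  refine ⟨fun f hf ↦ ?_⟩
  have hlim (i : ι) : ∃ a : R, ∀ n, f n i ≡ a [SMOD (I ^ n • ⊤ : Submodule R R)] := by
    refine IsPrecomplete.prec' (fun n ↦ f n i) fun hmn ↦ ?_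
    have hi := mem_smul_top_pi_iff.1 (SModEq.sub_mem.1 (hf hmn)) i
    rwa [SModEq.sub_mem, smul_eq_mul, Ideal.mul_top]
  choose a ha using hlim
  refine ⟨a, fun n ↦ SModEq.sub_mem.2 (mem_smul_top_pi_iff.2 fun i ↦ ?_)⟩
  have hi := ha i n
  rwa [SModEq.sub_mem, smul_eq_mul, Ideal.mul_top] at hi

theorem finite_of_finite_quotient_smul_top (I : Ideal R) [IsPrecomplete I R] [IsHausdorff I M]
    [Module.Finite R (M ⧸ (I • ⊤ : Submodule R M))] : Module.Finite R M := by
  obtain ⟨n, g, hg⟩ := Module.Finite.exists_fin' R (M ⧸ (I • ⊤ : Submodule R M))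
  obtain ⟨f, rfl⟩ := Module.projective_lifting_property (Submodule.mkQ _) g
    (Submodule.mkQ_surjective _)
  have := isPrecomplete_pi (Fin n) I
  exact .of_surjective f (surjective_of_mkQ_comp_surjective hg)

theorem isHausdorff_of_iInf_eq_bot {ι : Sort*} {I : Ideal R} {N : ι → Submodule R M}
    (hN : ⨅ i, N i = ⊥) (h : ∀ i, IsHausdorff I (M ⧸ N i)) : IsHausdorff I M := by
  refine ⟨fun m hm ↦ (Submodule.mem_bot R).1 (hN ▸ (Submodule.mem_iInf _).2 fun i ↦ ?_)⟩
  rw [← Submodule.Quotient.mk_eq_zero, ← Submodule.mkQ_apply]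
  refine (h i).haus' _ fun n ↦ SModEq.zero.2 ?_
  have hmn := Submodule.mem_map_of_mem (f := (N i).mkQ) (SModEq.zero.1 (hm n))
  rw [Submodule.map_smul''] at hmn
  exact Submodule.smul_mono le_rfl le_top hmn

end AdicFiniteness

section CompleteLocalRing

theorem not_isUnit_algebraMap_of_mem_maximalIdeal {R B : Type*} [CommRing R] [IsLocalRing R]
    [CommRing B] [Nontrivial B] [Algebra R B] [Algebra.IsIntegral R B] {r : R}
    (hr : r ∈ maximalIdeal R) : ¬ IsUnit (algebraMap R B r) := by
  obtain ⟨Q, hQ⟩ := Ideal.exists_maximal B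
  rw [← eq_maximalIdeal (Ideal.isMaximal_comap_of_isIntegral_of_isMaximal (R := R) Q)] at hr
  exact fun hu ↦ hQ.ne_top (Q.eq_top_of_isUnit_mem hr hu)

section

variable {A : Type*} [CommRing A] [IsNoetherianRing A] {K : Type*} [Field K] [Algebra A K]
  [IsFractionRing A K]

theorem iInf_span_algebraMap_pow_eq_bot {x : A} (hx : x ≠ 0)
    (hxu : ¬ IsUnit (algebraMap A (integralClosure A K) x)) :
    ⨅ n : ℕ, Ideal.span {algebraMap A (integralClosure A K) x ^ n} = ⊥ := by
  have hxK : algebraMap A K x ≠ 0 := by simpa using hx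
  refine (Submodule.eq_bot_iff _).2 fun b hb ↦ ?_
  simp only [Ideal.mem_iInf, Ideal.mem_span_singleton] at hb
  by_contra hb0
  have hinv : ¬ IsIntegral A (algebraMap A K x)⁻¹ := fun h ↦
    hxu (.of_mul_eq_one ⟨_, h⟩ (Subtype.ext (mul_inv_cancel₀ hxK)))
  obtain ⟨c, d, hd, hcd⟩ := IsFractionRing.div_surjective (A := A) (b : K)
  have hdK : algebraMap A K d ≠ 0 := (IsLocalization.map_units K ⟨d, hd⟩).ne_zero
  have hc : algebraMap A K c = algebraMap A K d * b := by rw [← hcd, mul_div_cancel₀ _ hdK]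
  obtain ⟨k, hk⟩ := exists_not_isIntegral_algebraMap_mul_pow hinv (c := c)
    (hc ▸ mul_ne_zero hdK (by simpa using hb0))
  obtain ⟨e, he⟩ := hb k
  have hbe : (b : K) = algebraMap A K x ^ k * e := congrArg Subtype.val he
  rw [hc, hbe, inv_pow, mul_assoc, mul_right_comm, mul_inv_cancel₀ (pow_ne_zero k hxK), one_mul]
    at hk
  exact hk (isIntegral_algebraMap.mul e.2)

end

theorem isFractionRing_of_forall_exists_mul_mem {R E K : Type*} [CommRing R] [CommRing E]
    [Algebra R E] [Field K] [Algebra E K] [IsFractionRing E K] (D : Subalgebra R E)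
    (hD : ∀ e : E, ∃ d ∈ D, d ≠ 0 ∧ d * e ∈ D) : IsFractionRing D K := by
  have hinj : Function.Injective (algebraMap E K) := IsFractionRing.injective E K
  have hne {e : E} (he : e ≠ 0) : algebraMap E K e ≠ 0 := by simpa using he
  have : IsDomain E := hinj.isDomain
  have : FaithfulSMul D K := (faithfulSMul_iff_algebraMap_injective D K).2
    (hinj.comp Subtype.val_injective)
  refine IsFractionRing.of_field D K fun z ↦ ?_
  obtain ⟨a, b, hb, rfl⟩ := IsFractionRing.div_surjective (A := E) z
  obtain ⟨c, hc, hc0, hca⟩ := hD a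
  obtain ⟨d, hd, hd0, hdb⟩ := hD b
  have hbK := hne (nonZeroDivisors.ne_zero hb)
  have hcK := hne hc0
  have hdK := hne hd0
  refine ⟨⟨c * a, hca⟩ * ⟨d, hd⟩, ⟨d * b, hdb⟩ * ⟨c, hc⟩, ?_⟩
  change _ = algebraMap E K (c * a * d) / algebraMap E K (d * b * c)
  simp only [map_mul]
  field_simp

theorem finite_of_finite_integralClosure {R E K : Type*} [CommRing R] [IsNoetherianRing R]
    [CommRing E] [Algebra R E] [Algebra.IsIntegral R E] [CommRing K] [Algebra E K]
    [FaithfulSMul E K] [Algebra R K] [IsScalarTower R E K] (D : Subalgebra R E)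
    [Module.Finite R (integralClosure D K)] : Module.Finite R E := by
  have hint (e : E) : IsIntegral D (algebraMap E K e) :=
    ((Algebra.IsIntegral.isIntegral (R := R) e).map (IsScalarTower.toAlgHom R E K)).tower_top
  let f : E →ₐ[R] integralClosure D K :=
    (IsScalarTower.toAlgHom R E K).codRestrict ((integralClosure D K).restrictScalars R) hint
  refine Module.Finite.of_injective f.toLinearMap fun a b hab ↦ ?_
  exact FaithfulSMul.algebraMap_injective E K (congrArg Subtype.val hab)

theorem finite_integralClosure_of_isField {A : Type*} [CommRing A] (hA : IsField A) (K : Type*)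
    [Field K] [Algebra A K] [IsFractionRing A K] : Module.Finite A (integralClosure A K) := by
  let := hA.toField
  have : Module.Finite A (⊥ : Subalgebra A K) := Subalgebra.finite_bot
  rwa [IsIntegrallyClosed.integralClosure_eq_bot A K]

theorem finite_quotient_of_mem_primeDenomIdeals {A K : Type*} [CommRing A] [IsNoetherianRing A]
    [Field K] [Algebra A K] [IsFractionRing A K] {Q : Ideal (integralClosure A K)}
    (hQ : Q ∈ primeDenomIdeals A K)
    (h : ∀ D : Subalgebra A (integralClosure A K ⧸ Q), Module.Finite A D →
      IsFractionRing D (FractionRing (integralClosure A K ⧸ Q)) →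
      Module.Finite A (integralClosure D (FractionRing (integralClosure A K ⧸ Q)))) :
    Module.Finite A (integralClosure A K ⧸ Q) := by
  obtain ⟨D, hDfin, hD⟩ := exists_finite_subalgebra_quotient_of_mem_primeDenomIdeals hQ
  have := hQ.1
  have := h D hDfin (isFractionRing_of_forall_exists_mul_mem D hD)
  exact finite_of_finite_integralClosure (K := FractionRing (integralClosure A K ⧸ Q)) D

theorem finite_of_finite_quotient_span_pow {S B : Type*} [CommRing S] [IsLocalRing S]
    [IsNoetherianRing S] [IsAdicComplete (maximalIdeal S) S] [CommRing B] [Algebra S B] {r : S}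
    (hr : r ∈ maximalIdeal S) (hbot : ⨅ n : ℕ, Ideal.span {algebraMap S B r ^ n} = ⊥)
    (hfin : ∀ n : ℕ, Module.Finite S (B ⧸ Ideal.span {algebraMap S B r ^ n})) :
    Module.Finite S B := by
  let N (n : ℕ) : Submodule S B := (Ideal.span {algebraMap S B r ^ n}).restrictScalars S
  have hN : ⨅ n, N n = ⊥ := SetLike.coe_injective (by simpa [N] using congrArg SetLike.coe hbot)
  have hNfin (n : ℕ) : Module.Finite S (B ⧸ N n) := hfin n
  have : IsHausdorff (maximalIdeal S) B := isHausdorff_of_iInf_eq_bot hN fun n ↦ inferInstance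
  have hle : N 1 ≤ maximalIdeal S • ⊤ := fun b hb ↦ by
    obtain ⟨c, rfl⟩ := Ideal.mem_span_singleton.1 hb
    rw [pow_one, ← Algebra.smul_def]
    exact Submodule.smul_mem_smul hr trivial
  have : Module.Finite S (B ⧸ (maximalIdeal S • ⊤ : Submodule S B)) :=
    .of_surjective (Submodule.factor hle) (Submodule.factor_surjective hle)
  exact finite_of_finite_quotient_smul_top (maximalIdeal S)

theorem isField_of_maximalIdeal_le_ker {S A : Type*} [CommRing S] [IsLocalRing S] [CommRing A]
    [IsDomain A] [Algebra S A] [Algebra.IsIntegral S A]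
    (h : maximalIdeal S ≤ RingHom.ker (algebraMap S A)) : IsField A := by
  have hker := le_antisymm (le_maximalIdeal (RingHom.ker_ne_top (algebraMap S A))) h
  refine Ring.isField_iff_maximal_bot.2
    (Ideal.isMaximal_of_isIntegral_of_isMaximal_comap (R := S) ⊥ ?_)
  change (RingHom.ker (algebraMap S A)).IsMaximal
  exact hker ▸ inferInstance

theorem ker_lt_ker_comp {A B C : Type*} [CommRing A] [CommRing B] [CommRing C] (f : A →+* B)
    (g : B →+* C) {a : A} (ha : f a ≠ 0) (hga : g (f a) = 0) :
    RingHom.ker f < RingHom.ker (g.comp f) :=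
  SetLike.lt_iff_le_and_exists.2
    ⟨fun b hb ↦ by rw [RingHom.mem_ker, RingHom.comp_apply, RingHom.mem_ker.1 hb, map_zero],
      a, hga, ha⟩

section

universe u v

theorem finite_integralClosure_of_isAdicComplete (S : Type u) [CommRing S] [IsLocalRing S]
    [IsNoetherianRing S] [IsAdicComplete (maximalIdeal S) S] (A K : Type v) [CommRing A]
    [IsDomain A] [Algebra S A] [Module.Finite S A] [Field K] [Algebra A K] [IsFractionRing A K] :
    Module.Finite A (integralClosure A K) := by
  generalize hp : RingHom.ker (algebraMap S A) = p
  induction p using IsNoetherian.induction generalizing A K with | hgt p ih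
  subst hp
  have : IsNoetherianRing A := IsNoetherianRing.of_finite S A
  by_cases hm : maximalIdeal S ≤ RingHom.ker (algebraMap S A)
  · exact finite_integralClosure_of_isField (isField_of_maximalIdeal_le_ker hm) K
  obtain ⟨r, hrm, hrp⟩ := Set.not_subset.1 hm
  replace hrp : algebraMap S A r ≠ 0 := hrp
  have hQfin (Q) (hQ : Q ∈ primeDenomIdeals A K)
      (hrQ : algebraMap A _ (algebraMap S A r) ∈ Q) :
      Module.Finite A (integralClosure A K ⧸ Q) := by
    refine finite_quotient_of_mem_primeDenomIdeals hQ fun D hDfin hDfrac ↦ ?_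
    have := hQ.1
    let : Algebra S D := ((algebraMap A D).comp (algebraMap S A)).toAlgebra
    have : IsScalarTower S A D := .of_algebraMap_eq fun _ ↦ rfl
    have : Module.Finite S D := .trans A D
    have hrD : algebraMap A D (algebraMap S A r) = 0 :=
      Subtype.ext (Ideal.Quotient.eq_zero_iff_mem.2 hrQ)
    have := ih _ (ker_lt_ker_comp (algebraMap S A) (algebraMap A D) hrp hrD) D
      (FractionRing (integralClosure A K ⧸ Q)) rfl
    exact .trans D _
  let : Algebra S (integralClosure A K) := ((algebraMap A _).comp (algebraMap S A)).toAlgebra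
  have : IsScalarTower S A (integralClosure A K) := .of_algebraMap_eq fun _ ↦ rfl
  have : Algebra.IsIntegral S (integralClosure A K) := .trans A
  suffices Module.Finite S (integralClosure A K) from .of_restrictScalars_finite S A _
  refine finite_of_finite_quotient_span_pow hrm ?_ fun n ↦ ?_
  · exact iInf_span_algebraMap_pow_eq_bot hrp
      (not_isUnit_algebraMap_of_mem_maximalIdeal (R := S) hrm)
  · have hN := isNoetherian_quotient_span_algebraMap (K := K) (pow_ne_zero n hrp) fun Q hQ hrQ ↦
      have := hQfin Q hQ (hQ.1.mem_of_pow_mem n (by rwa [← map_pow]))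
      isNoetherian_of_isNoetherianRing_of_finite A _
    rw [map_pow] at hN
    exact .trans A _

end

end CompleteLocalRing

section AdicCompletionMap

variable {A R : Type*} [CommRing A] [CommRing R] {J : Ideal A} {I : Ideal R}

theorem pow_le_comap_pow {φ : A →+* R} (h : J.map φ ≤ I) (n : ℕ) : J ^ n ≤ (I ^ n).comap φ :=
  Ideal.map_le_iff_le_comap.1 (Ideal.map_pow φ J n ▸ Ideal.pow_right_mono h n)

/-- For a ring homomorphism `φ` which maps the ideal `J` into `I`, the map from the `J`-adic
completion to `R ⧸ I ^ n` induced by `φ`; these assemble to `adicCompletionMap`. -/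
def adicCompletionToQuotient (φ : A →+* R) (h : J.map φ ≤ I) (n : ℕ) :
    AdicCompletion J A →+* R ⧸ I ^ n :=
  (Ideal.quotientMap (I ^ n) φ (pow_le_comap_pow h n)).comp (AdicCompletion.evalₐ J n).toRingHom

theorem factorPow_comp_adicCompletionToQuotient (φ : A →+* R) (h : J.map φ ≤ I) {m n : ℕ}
    (hmn : m ≤ n) : (Ideal.Quotient.factorPow I hmn).comp (adicCompletionToQuotient φ h n) =
      adicCompletionToQuotient φ h m := by
  ext x
  induction x using AdicCompletion.induction_on with | h a
  have ha : Ideal.Quotient.mk (J ^ m) (a.val n) = Ideal.Quotient.mk (J ^ m) (a.val m) :=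
    AdicCompletion.Ideal.mk_eq_mk J hmn a
  simpa [adicCompletionToQuotient] using
    congrArg (Ideal.quotientMap (I ^ m) φ (pow_le_comap_pow h m)) ha

/-- The ring homomorphism between adic completions induced by a ring homomorphism `φ` which maps
the ideal `J` into `I`. -/
def adicCompletionMap (φ : A →+* R) (h : J.map φ ≤ I) :
    AdicCompletion J A →+* AdicCompletion I R :=
  AdicCompletion.liftRingHom I (adicCompletionToQuotient φ h)
    (factorPow_comp_adicCompletionToQuotient φ h)

theorem adicCompletionMap_comp_algebraMap (φ : A →+* R) (h : J.map φ ≤ I) :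
    (adicCompletionMap φ h).comp (algebraMap A (AdicCompletion J A)) =
      (algebraMap R (AdicCompletion I R)).comp φ := by
  ext1 a
  refine AdicCompletion.ext_evalₐ fun n ↦ ?_
  simp only [RingHom.comp_apply, AdicCompletion.algebraMap_apply, adicCompletionMap]
  rw [AdicCompletion.evalₐ_liftRingHom (hf := factorPow_comp_adicCompletionToQuotient φ h)]
  simp [adicCompletionToQuotient]

theorem adicCompletionMap_surjective {φ : A →+* R} (hφ : Function.Surjective φ) (hJ : J.FG)
    (h : J.map φ = I) : Function.Surjective (adicCompletionMap φ h.le) := by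
  have hI : I.FG := h ▸ hJ.map φ
  have hmap : (J.map (algebraMap A (AdicCompletion J A))).map (adicCompletionMap φ h.le) =
      I.map (algebraMap R (AdicCompletion I R)) := by
    rw [Ideal.map_map, adicCompletionMap_comp_algebraMap, ← Ideal.map_map, h]
  have : IsAdicComplete (J.map (algebraMap A (AdicCompletion J A))) (AdicCompletion J A) :=
    (IsAdicComplete.map_algebraMap_iff _ _).2 (AdicCompletion.isAdicComplete hJ)
  have : IsAdicComplete (I.map (algebraMap R (AdicCompletion I R))) (AdicCompletion I R) :=
    (IsAdicComplete.map_algebraMap_iff _ _).2 (AdicCompletion.isAdicComplete hI)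
  rw [← hmap] at this
  refine surjective_of_mk_map_comp_surjective (I := J.map (algebraMap A (AdicCompletion J A))) _
    fun y ↦ ?_
  obtain ⟨x, rfl⟩ := Ideal.Quotient.mk_surjective y
  obtain ⟨r, hr⟩ := Ideal.Quotient.mk_surjective (AdicCompletion.evalOneₐ I x)
  obtain ⟨a, rfl⟩ := hφ r
  refine ⟨algebraMap A _ a, Ideal.Quotient.eq.2 ?_⟩
  refine hmap.ge ((AdicCompletion.ker_evalOneₐ_eq_map I hI).le ?_)
  rw [← RingHom.comp_apply, adicCompletionMap_comp_algebraMap]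
  simp [RingHom.mem_ker, ← hr]

theorem isNoetherianRing_adicCompletion [IsNoetherianRing R] (I : Ideal R) :
    IsNoetherianRing (AdicCompletion I R) := by
  obtain ⟨T, rfl⟩ := IsNoetherian.noetherian I
  let φ : MvPolynomial T R →+* R := (MvPolynomial.aeval ((↑) : T → R) : _ →ₐ[R] R)
  have hφ : Function.Surjective φ := fun r ↦ ⟨MvPolynomial.C r, by simp [φ]⟩
  have hvars : (MvPolynomial.idealOfVars T R).map φ = Ideal.span T := by
    rw [MvPolynomial.idealOfVars, Ideal.map_span, ← Set.range_comp]
    simp [φ, Function.comp_def]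
  have := isNoetherianRing_of_ringEquiv (MvPowerSeries T R)
    (MvPowerSeries.toAdicCompletionAlgEquiv T R).toRingEquiv
  exact isNoetherianRing_of_surjective _ _ _
    (adicCompletionMap_surjective hφ (MvPolynomial.idealOfVars_fg T R) hvars)

end AdicCompletionMap

section IntegralConductor

variable (R K : Type*) [CommRing R] [CommRing K] [Algebra R K]

/-- The conductor of `R` in its integral closure in `K`: the elements `r : R` such that `r • z`
comes from `R` for every `z : K` integral over `R`. -/
def integralConductor : Ideal R :=
  (1 : Submodule R K).colon (integralClosure R K : Set K)

variable {R K}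

theorem mem_integralConductor {r : R} :
    r ∈ integralConductor R K ↔ ∀ z : K, IsIntegral R z → ∃ q : R, algebraMap R K q = r • z := by
  simp only [integralConductor, Submodule.mem_colon, Submodule.mem_one]
  rfl

theorem exists_mem_integralConductor_algebraMap_eq_smul {r : R} (hr : r ∈ integralConductor R K)
    {z : K} (hz : IsIntegral R z) : ∃ q ∈ integralConductor R K, algebraMap R K q = r • z := by
  obtain ⟨q, hq⟩ := mem_integralConductor.1 hr z hz
  refine ⟨q, mem_integralConductor.2 fun y hy ↦ ?_, hq⟩
  rw [Algebra.smul_def, hq, smul_mul_assoc]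
  exact mem_integralConductor.1 hr _ (hz.mul hy)

theorem exists_mem_nonZeroDivisors_mem_integralConductor [IsFractionRing R K]
    [Module.Finite R (integralClosure R K)] :
    ∃ d ∈ nonZeroDivisors R, d ∈ integralConductor R K := by
  have hfg : (integralClosure R K).toSubmodule.FG := Module.Finite.iff_fg.1 ‹_›
  obtain ⟨d, hd, h⟩ := FractionalIdeal.isFractional_of_fg (S := nonZeroDivisors R) hfg
  exact ⟨d, hd, mem_integralConductor.2 h⟩

theorem finite_integralClosure_of_mem_integralConductor [IsNoetherianRing R] [IsFractionRing R K]
    {d : R} (hd : d ∈ nonZeroDivisors R) (hdC : d ∈ integralConductor R K) :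
    Module.Finite R (integralClosure R K) := by
  have hmem (z : integralClosure R K) : d • (z : K) ∈ (1 : Submodule R K) :=
    Submodule.mem_one.2 (mem_integralConductor.1 hdC z z.2)
  have : IsNoetherian R (1 : Submodule R K) :=
    isNoetherian_of_fg_of_noetherian _ (Submodule.one_eq_span (R := R) (A := K) ▸
      Submodule.fg_span_singleton 1)
  refine Module.Finite.of_injective (((LinearMap.lsmul R K d) ∘ₗ
    (integralClosure R K).val.toLinearMap).codRestrict 1 hmem) fun y z hyz ↦ Subtype.ext ?_
  have hd_unit : IsUnit (algebraMap R K d) := IsLocalization.map_units K ⟨d, hd⟩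
  have h : d • (y : K) = d • (z : K) := congrArg Subtype.val hyz
  rwa [Algebra.smul_def, Algebra.smul_def, hd_unit.mul_right_inj] at h

end IntegralConductor

section ReducedRing

variable {S : Type*} [CommRing S] [IsNoetherianRing S] [IsReduced S]

theorem exists_notMem_forall_mul_eq_zero_of_mem_minimalPrimes {P : Ideal S}
    (hP : P ∈ minimalPrimes S) : ∃ x ∉ P, ∀ y ∈ P, x * y = 0 := by
  have hass : P ∈ associatedPrimes S S :=
    Module.associatedPrimes.minimalPrimes_annihilator_subset_associatedPrimes S S (by
      rwa [Module.annihilator_eq_bot.2 inferInstance])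
  rw [AssociatedPrimes.mem_iff, isAssociatedPrime_iff] at hass
  obtain ⟨hprime, x, hx⟩ := hass
  have hmem (y : S) : y ∈ P ↔ y * x = 0 := by
    rw [hx, Submodule.mem_colon_singleton, Submodule.mem_bot, smul_eq_mul]
  refine ⟨x, fun hxP ↦ hprime.ne_top ?_, fun y hy ↦ by rw [mul_comm, (hmem y).1 hy]⟩
  have hx0 : x = 0 := eq_zero_of_pow_eq_zero (n := 2) (by
    rw [sq, (hmem x).1 hxP])
  rw [Ideal.eq_top_iff_one, hmem, hx0, mul_zero]

theorem exists_mem_nonZeroDivisors_of_forall_not_le {I : Ideal S}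
    (hI : ∀ P ∈ minimalPrimes S, ¬ I ≤ P) : ∃ c ∈ nonZeroDivisors S, c ∈ I := by
  by_contra! h
  obtain ⟨x, hx, hx0⟩ := SetLike.exists_of_lt
    (Ideal.bot_lt_annihilator_of_disjoint_nonZeroDivisors
      (Set.disjoint_left.2 fun c hc hc' ↦ h c hc' hc))
  refine hx0 ?_
  rw [← Ideal.zero_eq_bot, ← nilradical_eq_zero S, nilradical, ← Ideal.sInf_minimalPrimes,
    Submodule.mem_sInf]
  intro P hP
  obtain ⟨c, hcI, hcP⟩ := SetLike.not_le_iff_exists.1 (hI P hP)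
  have hxc : x * c = 0 := Submodule.mem_annihilator.1 hx c hcI
  exact (hP.isPrime.mem_or_mem (hxc ▸ P.zero_mem)).resolve_right hcP

theorem not_integralConductor_le_of_mem_minimalPrimes {Q L : Type*} [CommRing Q] [Algebra S Q]
    [IsFractionRing S Q] {P : Ideal S} (hP : P ∈ minimalPrimes S) [Field L] [Algebra S L]
    [Algebra (S ⧸ P) L] [IsScalarTower S (S ⧸ P) L] [IsFractionRing (S ⧸ P) L]
    [Module.Finite (S ⧸ P) (integralClosure (S ⧸ P) L)] : ¬ integralConductor S Q ≤ P := by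
  have := hP.isPrime
  have hzero {x : S} : algebraMap S L x = 0 ↔ x ∈ P := by
    rw [IsScalarTower.algebraMap_apply S (S ⧸ P) L, FaithfulSMul.algebraMap_eq_zero_iff]
    exact Ideal.Quotient.eq_zero_iff_mem
  have hunit (y : nonZeroDivisors S) : IsUnit (Algebra.ofId S L y) := isUnit_iff_ne_zero.2 fun h ↦
    Set.disjoint_left.1 (Ideal.disjoint_nonZeroDivisors_of_mem_minimalPrimes hP) (hzero.1 h) y.2
  let g : Q →ₐ[S] L := IsLocalization.liftAlgHom (M := nonZeroDivisors S) hunit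
  obtain ⟨x, hxP, hx⟩ := exists_notMem_forall_mul_eq_zero_of_mem_minimalPrimes hP
  have hker {w : Q} (hw : g w = 0) : x • w = 0 := by
    obtain ⟨a, b, rfl⟩ := IsLocalization.exists_mk'_eq (nonZeroDivisors S) w
    have ha : a ∈ P := hzero.1 (by
      rw [← g.commutes, ← IsLocalization.mk'_spec Q a b, map_mul, hw, zero_mul])
    rw [IsLocalization.smul_mk', hx a ha, IsLocalization.mk'_zero]
  obtain ⟨c, hc, hcC⟩ := exists_mem_nonZeroDivisors_mem_integralConductor (R := S ⧸ P) (K := L)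
  obtain ⟨c, rfl⟩ := Ideal.Quotient.mk_surjective c
  have hcP : c ∉ P := fun h ↦ nonZeroDivisors.ne_zero hc (Ideal.Quotient.eq_zero_iff_mem.2 h)
  refine fun hle ↦ (P.primeCompl.mul_mem hxP hcP) (hle (mem_integralConductor.2 fun z hz ↦ ?_))
  obtain ⟨q, hq⟩ := mem_integralConductor.1 hcC (g z) (hz.map g).tower_top
  obtain ⟨q, rfl⟩ := Ideal.Quotient.mk_surjective q
  have hcq : g (c • z - algebraMap S Q q) = 0 := by
    rw [map_sub, map_smul, g.commutes, sub_eq_zero, IsScalarTower.algebraMap_apply S (S ⧸ P) L]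
    exact (IsScalarTower.algebraMap_smul _ _ _).symm.trans hq.symm
  refine ⟨x * q, ?_⟩
  rw [map_mul, ← Algebra.smul_def, mul_smul, eq_comm, ← sub_eq_zero, ← smul_sub, hker hcq]

theorem finite_integralClosure_of_forall_minimalPrimes (Q : Type*) [CommRing Q] [Algebra S Q]
    [IsFractionRing S Q] (h : ∀ P ∈ minimalPrimes S,
    Module.Finite (S ⧸ P) (integralClosure (S ⧸ P) (FractionRing (S ⧸ P)))) :
    Module.Finite S (integralClosure S Q) := by
  obtain ⟨c, hc, hcC⟩ := exists_mem_nonZeroDivisors_of_forall_not_le (I := integralConductor S Q)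
    fun P hP ↦
      have := hP.isPrime
      have := h P hP
      not_integralConductor_le_of_mem_minimalPrimes hP (L := FractionRing (S ⧸ P))
  exact finite_integralClosure_of_mem_integralConductor hc hcC

end ReducedRing

section FaithfullyFlatDescent

variable {R S K Q : Type*} [CommRing R] [CommRing S] [Algebra R S] [Module.FaithfullyFlat R S]
  [CommRing K] [Algebra R K] [IsFractionRing R K] [CommRing Q] [Algebra S Q] [Algebra R Q]
  [IsScalarTower R S Q]

theorem mem_of_map_mem_span_image [FaithfulSMul S Q] (ι : K →ₐ[R] Q) {N : Submodule R K} {y : K}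
    (hy : ι y ∈ Submodule.span S (ι '' N)) : y ∈ N := by
  classical
  obtain ⟨t, htN, c, hc⟩ := (Submodule.mem_span_image_iff_exists_fun S).1 hy
  obtain ⟨b, hb⟩ := IsLocalization.exist_integer_multiples_of_finset (nonZeroDivisors R)
    (insert y t)
  obtain ⟨a, ha⟩ := hb y (Finset.mem_insert_self _ _)
  choose α hα using fun i : t ↦ hb i (Finset.mem_insert_of_mem i.2)
  have hsum : algebraMap R S a = ∑ i, c i * algebraMap R S (α i) := by
    apply FaithfulSMul.algebraMap_injective S Q
    simp only [map_sum, map_mul, ← IsScalarTower.algebraMap_apply R S Q, ← ι.commutes, ha, hα, ← hc,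
      Algebra.smul_def, Finset.mul_sum, mul_left_comm]
  have ha_mem : a ∈ Ideal.span (Set.range α) := by
    rw [← Ideal.comap_map_eq_self_of_faithfullyFlat (B := S) (Ideal.span _), Ideal.mem_comap, hsum]
    exact sum_mem fun i _ ↦ Ideal.mul_mem_left _ _
      (Ideal.mem_map_of_mem _ (Ideal.subset_span ⟨i, rfl⟩))
  obtain ⟨r, hr⟩ := Ideal.mem_span_range_iff_exists_fun.1 ha_mem
  have hyr : (b : R) • y = (b : R) • ∑ i, r i • (i : K) := by
    simp only [← ha, ← hr, map_sum, map_mul, hα, Algebra.smul_def, Finset.mul_sum,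
      mul_left_comm]
  have hb_unit : IsUnit (algebraMap R K b) := IsLocalization.map_units K b
  rw [Algebra.smul_def, Algebra.smul_def, hb_unit.mul_right_inj] at hyr
  exact hyr ▸ N.sum_mem fun i _ ↦ N.smul_mem _ (htN i.2)

variable (R S K Q) in
theorem finite_integralClosure_of_faithfullyFlat [IsNoetherianRing S] [IsFractionRing S Q]
    [Module.Finite S (integralClosure S Q)] : Module.Finite R (integralClosure R K) := by
  have hunit (y : nonZeroDivisors R) : IsUnit (Algebra.ofId R Q y) := by
    have hy : algebraMap R S y ∈ nonZeroDivisors S := by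
      rw [mem_nonZeroDivisors_iff_right]
      refine fun t ht ↦ Module.Flat.isSMulRegular_of_nonZeroDivisors (M := S) y.2 ?_
      simp only [Algebra.smul_def, mul_zero, mul_comm _ t, ht]
    have := IsLocalization.map_units Q (⟨_, hy⟩ : nonZeroDivisors S)
    rwa [← IsScalarTower.algebraMap_apply] at this
  let ι : K →ₐ[R] Q := IsLocalization.liftAlgHom (M := nonZeroDivisors R) hunit
  let N := (integralClosure R K).toSubmodule
  have hle : Submodule.span S (ι '' N) ≤ (integralClosure S Q).toSubmodule :=
    Submodule.span_le.2 (Set.image_subset_iff.2 fun z hz ↦ (IsIntegral.map ι hz).tower_top)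
  have hfg : (Submodule.span S (ι '' N)).FG :=
    have : IsNoetherian S (integralClosure S Q).toSubmodule :=
      isNoetherian_of_isNoetherianRing_of_finite S (integralClosure S Q)
    isNoetherian_submodule.1 this _ hle
  classical
  obtain ⟨t', ht', ht⟩ := (Submodule.fg_span_iff_fg_span_finset_subset _).1 hfg
  obtain ⟨t, htN, rfl⟩ := Finset.subset_set_image_iff.1 ht'
  refine Module.Finite.iff_fg.2 ⟨t, le_antisymm (Submodule.span_le.2 htN) fun y hy ↦ ?_⟩
  refine mem_of_map_mem_span_image (S := S) ι
    (Submodule.span_mono (Set.image_mono Submodule.subset_span) ?_)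
  rw [← Finset.coe_image, ← ht]
  exact Submodule.subset_span ⟨y, hy, rfl⟩

end FaithfullyFlatDescent

theorem finite_integralClosure_of_isReduced_adicCompletion (R K : Type*) [CommRing R]
    [IsLocalRing R] [IsNoetherianRing R] [IsReduced (AdicCompletion (maximalIdeal R) R)]
    [CommRing K] [Algebra R K] [IsFractionRing R K] : Module.Finite R (integralClosure R K) := by
  let S := AdicCompletion (maximalIdeal R) R
  have : IsNoetherianRing S := isNoetherianRing_adicCompletion _
  have : Module.FaithfullyFlat R S := Module.FaithfullyFlat.of_flat_of_isLocalHom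
  have := finite_integralClosure_of_forall_minimalPrimes (S := S) (FractionRing S) fun P hP ↦
    have := hP.isPrime
    finite_integralClosure_of_isAdicComplete S (S ⧸ P) (FractionRing (S ⧸ P))
  exact finite_integralClosure_of_faithfullyFlat R S K (FractionRing S)

section ProjectiveDimension

universe u

theorem hasProjectiveDimensionLT_of_subsingleton_ext {R : Type u} [CommRing R] (X : ModuleCat.{u} R)
    {n : ℕ} (h : ∀ (N : ModuleCat.{u} R) (i : ℕ), n < i →
      Subsingleton (((Ext R (ModuleCat.{u} R) i).obj (Opposite.op X)).obj N)) :
    HasProjectiveDimensionLT X (n + 1) := by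
  refine HasProjectiveDimensionLT.mk fun i hi N e ↦ ?_
  let P := (HasProjectiveResolution.out (Z := X)).some
  obtain ⟨j, rfl⟩ := Nat.exists_eq_add_one.2 (Nat.zero_lt_of_lt hi)
  obtain ⟨f, hf, rfl⟩ := P.extMk_surjective e (j + 2) rfl
  rw [P.extMk_eq_zero_iff _ _ _ _ j rfl]
  have := h N (j + 1) hi
  have hzero : Limits.IsZero ((P.complex.linearYonedaObj R N).homology (j + 1)) :=
    (ModuleCat.isZero_of_subsingleton _).of_iso (P.isoExt (R := R) (j + 1) N).symm
  rw [← HomologicalComplex.exactAt_iff_isZero_homology,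
    HomologicalComplex.exactAt_iff' _ j (j + 1) (j + 2) (by simp) (by simp),
    ShortComplex.moduleCat_exact_iff] at hzero
  exact hzero f hf

theorem exists_surjective_forall_mem_maximalIdeal {A M : Type*} [CommRing A] [IsLocalRing A]
    [AddCommGroup M] [Module A M] [Module.Finite A M] :
    ∃ (n : ℕ) (f : (Fin n → A) →ₗ[A] M), Function.Surjective f ∧
      ∀ v ∈ LinearMap.ker f, ∀ i, v i ∈ maximalIdeal A := by
  let B := Module.finBasis (ResidueField A) (TensorProduct A (ResidueField A) M)
  choose x hx using fun i ↦
    TensorProduct.mk_surjective A M (ResidueField A) Ideal.Quotient.mk_surjective (B i)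
  refine ⟨_, Fintype.linearCombination A x, ?_, fun v hv i ↦ ?_⟩
  · rw [← LinearMap.range_eq_top, Fintype.range_linearCombination]
    exact span_eq_top_of_tmul_eq_basis x B hx
  · have hsum : ∑ i, residue A (v i) • B i = 0 := by
      simpa [Fintype.linearCombination_apply, ← hx, ← ResidueField.algebraMap_eq] using
        congrArg (TensorProduct.mk A (ResidueField A) M 1) hv
    exact (residue_eq_zero_iff _).1 (Fintype.linearIndependent_iff.1 B.linearIndependent _ hsum i)

theorem dvd_of_forall_exists_smul_eq_smul {A F : Type*} [CommRing A] [AddCommGroup F] [Module A F]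
    [Module.Free A F] [Nontrivial F] {s b : A} (h : ∀ v : F, ∃ w : F, b • v = s • w) : s ∣ b := by
  let B := Module.Free.chooseBasis A F
  obtain ⟨i⟩ : Nonempty (Module.Free.ChooseBasisIndex A F) := B.index_nonempty
  obtain ⟨w, hw⟩ := h (B i)
  exact ⟨B.repr w i, by simpa using congrArg (B.repr · i) hw⟩

theorem free_of_hasProjectiveDimensionLT {A : Type u} [CommRing A] [IsLocalRing A]
    [IsNoetherianRing A] {s b : A} (hs : IsSMulRegular A s) (hb : ¬ s ∣ b)
    (hm : ∀ a ∈ maximalIdeal A, s ∣ a * b) (n : ℕ) (M : Type u) [AddCommGroup M] [Module A M]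
    [Module.Finite A M] (hM : IsSMulRegular M s)
    (h : HasProjectiveDimensionLT (ModuleCat.of A M) (n + 1)) : Module.Free A M := by
  induction n generalizing M with
  | zero =>
    rw [← projective_iff_hasProjectiveDimensionLT_one, ← IsProjective.iff_projective] at h
    exact Module.free_of_flat_of_isLocalRing
  | succ n ih =>
    obtain ⟨k, f, hf, hker⟩ := exists_surjective_forall_mem_maximalIdeal (A := A) (M := M)
    have : Module.Free A (LinearMap.ker f) := by
      refine ih _ (IsSMulRegular.submodule _ _ (IsSMulRegular.pi fun _ ↦ hs)) ?_
      have : Projective f.shortComplexKer.X₂ :=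
        (IsProjective.iff_projective _).1 (inferInstanceAs (Module.Projective A (Fin k → A)))
      exact ((LinearMap.shortExact_shortComplexKer hf).hasProjectiveDimensionLT_X₃_iff n this).1 h
    have hdvd (v : LinearMap.ker f) : ∃ w : LinearMap.ker f, b • v = s • w := by
      choose w hw using fun i ↦ hm (v.1 i) (hker v v.2 i)
      have hvw : b • (v : Fin k → A) = s • w := funext fun i ↦ by
        simpa only [Pi.smul_apply, smul_eq_mul, mul_comm b] using hw i
      refine ⟨⟨w, hM (?_ : s • f w = s • 0)⟩, Subtype.ext hvw⟩
      rw [← map_smul, ← hvw, map_smul, v.2, smul_zero, smul_zero]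
    have hinj : Function.Injective f := by
      rw [← LinearMap.ker_eq_bot, ← Submodule.subsingleton_iff_eq_bot,
        ← not_nontrivial_iff_subsingleton]
      exact fun _ ↦ hb (dvd_of_forall_exists_smul_eq_smul (F := LinearMap.ker f) hdvd)
    exact Module.Free.of_equiv (LinearEquiv.ofBijective f ⟨hinj, hf⟩)

end ProjectiveDimension

section SocleElement

variable {R : Type*} [CommRing R]

theorem exists_isPrime_mem_iff_dvd_mul [IsNoetherianRing R] {s a : R} (h : ¬ s ∣ a) :
    ∃ (p : Ideal R) (_ : p.IsPrime) (r : R), ∀ t, t ∈ p ↔ s ∣ t * (r * a) := by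
  let x : R ⧸ Ideal.span {s} := Ideal.Quotient.mk _ a
  have hx : x ≠ 0 := by
    rwa [Ne, Ideal.Quotient.eq_zero_iff_dvd]
  obtain ⟨p, hp, -⟩ := exists_le_isAssociatedPrime_of_isNoetherianRing R
    (⟨x, Submodule.mem_span_singleton_self x⟩ : Submodule.span R {x}) (by simpa using hx)
  rw [isAssociatedPrime_iff] at hp
  obtain ⟨hprime, ⟨y, hy⟩, hpy⟩ := hp
  obtain ⟨r, rfl⟩ := Submodule.mem_span_singleton.1 hy
  refine ⟨p, hprime, r, fun t ↦ ?_⟩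
  rw [hpy, Submodule.mem_colon_singleton, Submodule.mem_bot, ← Subtype.coe_inj,
    ← Ideal.Quotient.eq_zero_iff_dvd]
  rfl

variable {p : Ideal R} [p.IsPrime] {s b : R} (A : Type*) [CommRing A] [Algebra R A]
  [IsLocalization.AtPrime A p]

theorem not_algebraMap_dvd_algebraMap_of_mem_iff_dvd_mul
    (h : ∀ t, t ∈ p ↔ s ∣ t * b) : ¬ algebraMap R A s ∣ algebraMap R A b := by
  rintro ⟨z, hz⟩
  obtain ⟨w, t, rfl⟩ := IsLocalization.exists_mk'_eq p.primeCompl z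
  have hbt : algebraMap R A (b * t) = algebraMap R A (s * w) := by
    rw [map_mul, hz, mul_assoc, IsLocalization.mk'_spec, map_mul]
  obtain ⟨t', ht'⟩ := (IsLocalization.eq_iff_exists p.primeCompl A).1 hbt
  exact (t' * t).2 ((h _).2 ⟨t' * w, by rw [Submonoid.coe_mul]; linear_combination ht'⟩)

theorem algebraMap_dvd_mul_of_mem_maximalIdeal [IsLocalRing A]
    (h : ∀ t ∈ p, s ∣ t * b) {z : A} (hz : z ∈ maximalIdeal A) :
    algebraMap R A s ∣ z * algebraMap R A b := by
  obtain ⟨w, t, rfl⟩ := IsLocalization.exists_mk'_eq p.primeCompl z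
  have hw : w ∈ p := (IsLocalization.AtPrime.mk'_mem_maximal_iff A p w t).1 hz
  have ht : IsUnit (algebraMap R A t) := IsLocalization.map_units A t
  rw [← ht.dvd_mul_right, mul_right_comm, IsLocalization.mk'_spec, ← map_mul]
  exact map_dvd _ (h w hw)

end SocleElement

section LocalizedModule

universe u

theorem exists_smul_eq_smul_of_isLocalizedModule {R M N : Type*} [CommRing R] [AddCommGroup M]
    [Module R M] [AddCommGroup N] [Module R N] (S : Submonoid R) (g : M →ₗ[R] N)
    [IsLocalizedModule S g] {s b : R} (h : ∀ x : M, ∃ y : M, b • x = s • y) (z : N) :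
    ∃ w : N, b • z = s • w := by
  obtain ⟨⟨x, t⟩, rfl⟩ := IsLocalizedModule.mk'_surjective S g z
  obtain ⟨y, hy⟩ := h x
  refine ⟨IsLocalizedModule.mk' g y t, ?_⟩
  simp only [Function.uncurry_apply_pair, ← IsLocalizedModule.mk'_smul, hy]

theorem nontrivial_of_isLocalizedModule_of_faithfulSMul {R M N : Type*} [CommRing R]
    [AddCommGroup M] [Module R M] [Module.Finite R M] [FaithfulSMul R M] [AddCommGroup N]
    [Module R N] (p : Ideal R) [p.IsPrime] (g : M →ₗ[R] N) [IsLocalizedModule p.primeCompl g] :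
    Nontrivial N := by
  have hp : (⟨p, ‹_›⟩ : PrimeSpectrum R) ∈ Module.support R M := by
    rw [Module.mem_support_iff_of_finite, Module.annihilator_eq_bot.2 ‹_›]
    exact bot_le
  rw [Module.mem_support_iff] at hp
  exact (IsLocalizedModule.iso p.primeCompl g).symm.toEquiv.nontrivial

theorem dvd_of_forall_exists_smul_eq_smul_of_hasProjectiveDimensionLT {R M : Type u} [CommRing R]
    [IsNoetherianRing R] [AddCommGroup M] [Module R M] [Module.Finite R M] [FaithfulSMul R M]
    {n : ℕ} (hpd : HasProjectiveDimensionLT (ModuleCat.of R M) (n + 1)) {s a : R}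
    (hs : IsSMulRegular M s) (h : ∀ x : M, ∃ y : M, a • x = s • y) : s ∣ a := by
  by_contra hsa
  obtain ⟨p, _, r, hp⟩ := exists_isPrime_mem_iff_dvd_mul hsa
  let A := Localization.AtPrime p
  have hsR : IsSMulRegular R s := fun t t' ht ↦ FaithfulSMul.eq_of_smul_eq_smul fun x : M ↦ hs (by
    simpa only [smul_assoc] using congrArg (· • x) ht)
  have hra (x : M) : ∃ y : M, (r * a) • x = s • y := by
    obtain ⟨y, hy⟩ := h x
    exact ⟨r • y, by rw [mul_smul, hy, smul_comm]⟩
  let N := (ModuleCat.of R M).localizedModule p.primeCompl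
  let g : M →ₗ[R] N := (ModuleCat.of R M).localizedModuleMkLinearMap p.primeCompl
  have : IsLocalizedModule p.primeCompl g :=
    ModuleCat.localizedModule_isLocalizedModule (ModuleCat.of R M) p.primeCompl
  have : Module.Finite A N := Module.Finite.of_isLocalizedModule p.primeCompl g
  have : Nontrivial N := nontrivial_of_isLocalizedModule_of_faithfulSMul p g
  have hb := not_algebraMap_dvd_algebraMap_of_mem_iff_dvd_mul A hp
  have : Module.Free A N := free_of_hasProjectiveDimensionLT
    (hsR.of_isLocalization A p.primeCompl) hb
    (fun z hz ↦ algebraMap_dvd_mul_of_mem_maximalIdeal A (fun t ↦ (hp t).1) hz) n N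
    (hs.of_isLocalizedModule A p.primeCompl g)
    (ModuleCat.localizedModule_hasProjectiveDimensionLE n p.primeCompl (ModuleCat.of R M))
  refine hb (dvd_of_forall_exists_smul_eq_smul (F := N) fun z ↦ ?_)
  simpa only [algebraMap_smul] using exists_smul_eq_smul_of_isLocalizedModule p.primeCompl g hra z

end LocalizedModule

section NormalityCriterion

universe u

theorem integralClosure_eq_bot_of_hasProjectiveDimensionLT {R : Type u} {K : Type*} [CommRing R]
    [IsNoetherianRing R] [CommRing K] [Algebra R K] [IsFractionRing R K]
    [Module.Finite R (integralClosure R K)] {n : ℕ}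
    (hpd : HasProjectiveDimensionLT (ModuleCat.of R (integralConductor R K)) (n + 1)) :
    integralClosure R K = ⊥ := by
  obtain ⟨d, hd, hdC⟩ := exists_mem_nonZeroDivisors_mem_integralConductor (R := R) (K := K)
  have : FaithfulSMul R (integralConductor R K) := ⟨fun {r r'} h ↦
    (mul_cancel_right_mem_nonZeroDivisors hd).1 (congrArg Subtype.val (h ⟨d, hdC⟩))⟩
  refine eq_bot_iff.2 fun y hy ↦ ?_
  obtain ⟨a, s, rfl⟩ := IsLocalization.exists_mk'_eq (nonZeroDivisors R) y
  have hs : IsSMulRegular (integralConductor R K) (s : R) :=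
    IsSMulRegular.submodule _ _ (isLeftRegular_iff.1 (isRegular_iff_mem_nonZeroDivisors.2 s.2).left)
  obtain ⟨q, hq⟩ : (s : R) ∣ a := by
    refine dvd_of_forall_exists_smul_eq_smul_of_hasProjectiveDimensionLT hpd hs fun c ↦ ?_
    obtain ⟨c', hc', h⟩ := exists_mem_integralConductor_algebraMap_eq_smul c.2 hy
    refine ⟨⟨c', hc'⟩, Subtype.ext (IsFractionRing.injective R K ?_)⟩
    simp only [Submodule.coe_smul, smul_eq_mul, map_mul, h, ← IsLocalization.mk'_spec K a s,
      Algebra.smul_def]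
    ring
  exact Algebra.mem_bot.2 ⟨q, by rw [IsLocalization.eq_mk'_iff_mul_eq, hq, map_mul, mul_comm]⟩

end NormalityCriterion

theorem conductorIdeal_eq_integralConductor (R : Type) [CommRing R] :
    conductorIdeal R = integralConductor R (FractionRing R) := by
  ext r
  rw [conductorIdeal, Module.mem_annihilator, mem_integralConductor,
    (Submodule.Quotient.mk_surjective _).forall]
  simp only [← Submodule.Quotient.mk_smul, Submodule.Quotient.mk_eq_zero, Subtype.forall,
    mem_integralClosure_iff, LinearMap.mem_range, Subtype.ext_iff]
  rfl

-- STATEMENT 0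
theorem stmt0 (R : Type) [CommRing R] [IsLocalRing R] [IsNoetherianRing R]
    (hau : AnalyticallyUnramified R)
    (hpd : HasFiniteProjDim R ↥(conductorIdeal R)) :
    IsNormalRing R := by
  have : IsReduced (AdicCompletion (maximalIdeal R) R) := hau
  have := finite_integralClosure_of_isReduced_adicCompletion R (FractionRing R)
  rw [conductorIdeal_eq_integralConductor] at hpd
  obtain ⟨n, hn⟩ := hpd
  exact ⟨isReduced_of_injective (algebraMap R (AdicCompletion (maximalIdeal R) R))
      (AdicCompletion.of_injective (maximalIdeal R) R),
    integralClosure_eq_bot_of_hasProjectiveDimensionLT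
      (hasProjectiveDimensionLT_of_subsingleton_ext _ hn)⟩
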